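/- Let k ≥ 1 be a fixed integer and let K_n, P_n, p_n be scalings with K_n ≥ 2 for all sufficiently large n, P_n = Ω(n), and K_n²/P_n = O(1/ln n). Define α_n by p_n·(K_n²/P_n) = (ln n + (k−1)·ln ln n + α_n)/n. If lim_{n→∞} α_n = +∞, then P[𝔾_on(n,K_n,P_n,p_n) is k-connected] → 1 and P[the minimum vertex degree of 𝔾_on(n,K_n,P_n,p_n) is at least k] → 1 as n → ∞. -/

import Mathlib

open MeasureTheory Filter Asymptotics
open scoped ENNReal

noncomputable section

/-- Key rings: `K`-element subsets of a key pool of size `P`. -/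
abbrev KeyRing (P K : ℕ) : Type := {s : Finset (Fin P) // s.card = K}

instance (P K : ℕ) : MeasurableSpace (KeyRing P K) := ⊤

/-- The uniform probability measure on key rings. -/
def uniformKeyMeasure (P K : ℕ) : Measure (KeyRing P K) :=
  (Fintype.card (KeyRing P K) : ℝ≥0∞)⁻¹ • (Measure.count : Measure (KeyRing P K))

/-- The Bernoulli measure with parameter `p` on `Bool`. -/
def bern (p : ℝ) : Measure Bool :=
  ENNReal.ofReal p • Measure.dirac true + ENNReal.ofReal (1 - p) • Measure.dirac false

/-- Sample space underlying `𝔾_on(n, K, P, p)`: independent key rings for the `n`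
nodes together with independent on/off channel states for each pair of nodes. -/
abbrev GonSpace (n K P : ℕ) : Type :=
  (Fin n → KeyRing P K) × (Sym2 (Fin n) → Bool)

/-- The probability measure of the model `𝔾_on(n, K, P, p)`: the key rings of the
`n` nodes are independent and uniform, and the channels are independent
Bernoulli(`p`) variables, independent of the key rings. -/
def gonMeasure (n K P : ℕ) (p : ℝ) : Measure (GonSpace n K P) :=
  (Measure.pi fun _ : Fin n => uniformKeyMeasure P K).prod
    (Measure.pi fun _ : Sym2 (Fin n) => bern p)

/-- The random graph `𝔾_on`: an edge is present iff the key rings intersect and the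
channel between the two nodes is on. -/
def gonGraph {n K P : ℕ} (ω : GonSpace n K P) : SimpleGraph (Fin n) where
  Adj i j := i ≠ j ∧ ((ω.1 i).1 ∩ (ω.1 j).1).Nonempty ∧ ω.2 s(i, j) = true
  symm := by
    constructor
    rintro i j ⟨h1, h2, h3⟩
    exact ⟨h1.symm, by rwa [Finset.inter_comm], by rwa [Sym2.eq_swap]⟩
  loopless := ⟨fun i h => h.1 rfl⟩

/-- The random key graph `G(n, K, P)`: an edge is present iff the key rings intersect. -/
def rkgGraph {n K P : ℕ} (ω : Fin n → KeyRing P K) : SimpleGraph (Fin n) where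
  Adj i j := i ≠ j ∧ ((ω i).1 ∩ (ω j).1).Nonempty
  symm := by
    constructor
    rintro i j ⟨h1, h2⟩
    exact ⟨h1.symm, by rwa [Finset.inter_comm]⟩
  loopless := ⟨fun i h => h.1 rfl⟩

/-- The probability measure of the random key graph model. -/
def rkgMeasure (n K P : ℕ) : Measure (Fin n → KeyRing P K) :=
  Measure.pi fun _ : Fin n => uniformKeyMeasure P K

/-- Degree of a vertex. -/
def gDeg {V : Type*} (G : SimpleGraph V) (v : V) : ℕ := Nat.card {w // G.Adj v w}

/-- Minimum vertex degree. -/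
def minDeg {V : Type*} (G : SimpleGraph V) : ℕ := sInf (Set.range (gDeg G))

/-- A graph is `k`-connected if it remains connected after the removal of any
`k - 1` of its vertices. -/
def KConnected {V : Type*} (G : SimpleGraph V) (k : ℕ) : Prop :=
  ∀ S : Finset V, S.card ≤ k - 1 → (G.induce ((S : Set V)ᶜ)).Connected

/-- Vertex connectivity: the least number of vertices whose deletion disconnects
the graph. -/
def vertexConn {V : Type*} (G : SimpleGraph V) : ℕ :=
  sInf {m | ∃ S : Finset V, S.card = m ∧ ¬ (G.induce ((S : Set V)ᶜ)).Connected}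

/-- `p_s`: the probability that two key rings share at least one key. -/
def psf (K P : ℕ) : ℝ :=
  if 2 * K ≤ P then 1 - (Nat.choose (P - K) K : ℝ) / (Nat.choose P K : ℝ) else 1

/-- `p_e = p · p_s`: the probability of an edge in `𝔾_on`. -/
def pef (K P : ℕ) (p : ℝ) : ℝ := p * psf K P

/-- The event `D_{x,ℓ}` that the node with index `x` has degree exactly `ℓ`. -/
def degEvent (n K P : ℕ) (x ℓ : ℕ) : Set (GonSpace n K P) :=
  {ω | ∃ hx : x < n, gDeg (gonGraph ω) ⟨x, hx⟩ = ℓ}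

/-- The event `E_{xy}` that the edge between the nodes with indices `x`, `y` is present. -/
def edgeEvent (n K P : ℕ) (x y : ℕ) : Set (GonSpace n K P) :=
  {ω | ∃ (hx : x < n) (hy : y < n), (gonGraph ω).Adj ⟨x, hx⟩ ⟨y, hy⟩}

/-- The event that the key rings of nodes `x` and `y` share exactly `u` keys. -/
def interCardEvent (n K P : ℕ) (x y u : ℕ) : Set (GonSpace n K P) :=
  {ω | ∃ (hx : x < n) (hy : y < n), ((ω.1 ⟨x, hx⟩).1 ∩ (ω.1 ⟨y, hy⟩).1).card = u}

/-- The event `K_{xy}` that the key rings of nodes `x` and `y` share at least one key. -/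
def keyShareEvent (n K P : ℕ) (x y : ℕ) : Set (GonSpace n K P) :=
  {ω | ∃ (hx : x < n) (hy : y < n), ((ω.1 ⟨x, hx⟩).1 ∩ (ω.1 ⟨y, hy⟩).1).Nonempty}

/-- `r_n = min(⌊P/K⌋, ⌊n/2⌋)`. -/
def rn (n K P : ℕ) : ℕ := min (P / K) (n / 2)

/-- The threshold array `J`. -/
def Jarr (n K P : ℕ) (ε lam mu : ℝ) (i : ℕ) : ℕ :=
  if i ≤ rn n K P then max ⌊(1 + ε) * (K : ℝ)⌋₊ ⌊lam * (K : ℝ) * (i : ℝ)⌋₊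
  else ⌊mu * (P : ℝ)⌋₊

/-- The event `𝓔(J)`: some set `T` of at least two nodes has a union of key rings of
size at most `J_{|T|}`. -/
def EJ (n K P : ℕ) (ε lam mu : ℝ) : Set (GonSpace n K P) :=
  {ω | ∃ T : Finset (Fin n), 2 ≤ T.card ∧
    (T.biUnion fun i => (ω.1 i).1).card ≤ Jarr n K P ε lam mu T.card}

open scoped BigOperators

/-! ### Finite averages and uniform key rings -/

/-- Resampling one coordinate does not change the average over a finite product. -/
theorem expect_update {ι α : Type*} [Fintype ι] [DecidableEq ι] [Fintype α] [Nonempty α]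
    (F : (ι → α) → ℝ) (v : ι) :
    𝔼 σ, F σ = 𝔼 σ : ι → α, 𝔼 s : α, F (Function.update σ v s) := by
  have hl : 𝔼 σ, F σ = 𝔼 σ : ι → α, 𝔼 _s : α, F σ := by simp
  rw [hl, ← Finset.expect_product' Finset.univ Finset.univ (fun σ _ => F σ),
    ← Finset.expect_product' Finset.univ Finset.univ (fun σ s => F (Function.update σ v s))]
  refine Finset.expect_nbij' (fun x => (Function.update x.1 v x.2, x.1 v))
    (fun x => (Function.update x.1 v x.2, x.1 v)) ?_ ?_ ?_ ?_ ?_ <;> simp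

theorem nonempty_keyRing {P K : ℕ} (h : K ≤ P) : Nonempty (KeyRing P K) := by
  obtain ⟨s, -, hs⟩ := Finset.exists_subset_card_eq
    (s := (Finset.univ : Finset (Fin P))) (n := K) (by simpa using h)
  exact ⟨⟨s, hs⟩⟩

theorem choose_sub_sub_le {P K : ℕ} (hKP : K ≤ P) (a : ℕ) (ha : a ≤ K) :
    ((P - a).choose (K - a) : ℝ) ≤ P.choose K * ((K : ℝ) / P) ^ a := by
  induction a with
  | zero => simp
  | succ a ih =>
    have ih := ih (by omega)
    obtain ⟨N, hN⟩ : ∃ N, P - a = N + 1 := ⟨P - a - 1, by omega⟩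
    obtain ⟨m, hm⟩ : ∃ m, K - a = m + 1 := ⟨K - a - 1, by omega⟩
    have e1 : P - (a + 1) = N := by omega
    have e2 : K - (a + 1) = m := by omega
    rw [hN, hm] at ih
    rw [e1, e2, pow_succ, ← mul_assoc]
    have h1 : ((N : ℝ) + 1) * N.choose m = (N + 1).choose (m + 1) * (m + 1) := by
      exact_mod_cast Nat.add_one_mul_choose_eq N m
    have hP : (P : ℝ) = N + 1 + a := by
      have : P = N + 1 + a := by omega
      exact_mod_cast this
    have hK : (K : ℝ) = m + 1 + a := by
      have : K = m + 1 + a := by omega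
      exact_mod_cast this
    have hmN : (m : ℝ) ≤ N := by
      have : m ≤ N := by omega
      exact_mod_cast this
    have hr : ((m : ℝ) + 1) / (N + 1) ≤ K / P := by
      rw [hP, hK, div_le_div_iff₀ (by positivity) (by positivity)]
      nlinarith [mul_nonneg (Nat.cast_nonneg (α := ℝ) a) (sub_nonneg.2 hmN)]
    have h2 : (N.choose m : ℝ) = (N + 1).choose (m + 1) * ((m + 1) / (N + 1)) := by
      field_simp
      linarith
    rw [h2]
    gcongr

theorem choose_sub_le {P K : ℕ} (hKP : K ≤ P) (a : ℕ) (ha : a ≤ P) :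
    ((P - a).choose K : ℝ) ≤ P.choose K * (1 - (K : ℝ) / P) ^ a := by
  induction a with
  | zero => simp
  | succ a ih =>
    have ih := ih (by omega)
    obtain ⟨N, hN⟩ : ∃ N, P - a = N + 1 := ⟨P - a - 1, by omega⟩
    have e1 : P - (a + 1) = N := by omega
    have hPpos : (0 : ℝ) < P := by
      have : 0 < P := by omega
      exact_mod_cast this
    have hx : 0 ≤ 1 - (K : ℝ) / P := by
      rw [sub_nonneg, div_le_one hPpos]
      exact_mod_cast hKP
    rw [hN] at ih
    rw [e1]
    rcases lt_or_ge N K with h | h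
    · rw [Nat.choose_eq_zero_of_lt h]
      simp only [Nat.cast_zero]
      positivity
    rw [pow_succ, ← mul_assoc]
    have hP : (P : ℝ) = N + 1 + a := by
      have : P = N + 1 + a := by omega
      exact_mod_cast this
    have h1 : (N.choose K : ℝ) * (N + 1) = (N + 1).choose K * (N + 1 - K) := by
      have := Nat.choose_mul_succ_eq N K
      have h' : ((N + 1 - K : ℕ) : ℝ) = N + 1 - K := by
        rw [Nat.cast_sub (by omega)]
        push_cast
        ring
      rw [← h']
      exact_mod_cast this
    have h2 : (N.choose K : ℝ) = (N + 1).choose K * (1 - K / (N + 1)) := by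
      field_simp
      linarith
    have hr : 1 - (K : ℝ) / (N + 1) ≤ 1 - K / P := by
      have : (K : ℝ) / P ≤ K / (N + 1) := by
        refine div_le_div_of_nonneg_left (by positivity) (by positivity) ?_
        linarith [Nat.cast_nonneg (α := ℝ) a]
      linarith
    have h0 : 0 ≤ 1 - (K : ℝ) / (N + 1) := by
      rw [sub_nonneg, div_le_one (by positivity)]
      exact_mod_cast (by omega : K ≤ N + 1)
    rw [h2]
    exact mul_le_mul ih hr h0 (by positivity)

theorem expect_ite_eq_card {α : Type*} [Fintype α] (q : α → Prop) [DecidablePred q] :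
    𝔼 s : α, (if q s then (1 : ℝ) else 0)
      = ((Finset.univ.filter q).card : ℝ) / Fintype.card α := by
  rw [Fintype.expect_eq_sum_div_card, Finset.sum_boole]

/-- The probability that a uniform key ring contains `A`. -/
theorem expect_subset_le {P K : ℕ} (hKP : K ≤ P) (A : Finset (Fin P)) :
    𝔼 s : KeyRing P K, (if A ⊆ s.1 then (1 : ℝ) else 0) ≤ ((K : ℝ) / P) ^ A.card := by
  rw [expect_ite_eq_card, Fintype.card_finset_len, Fintype.card_fin,
    div_le_iff₀ (by exact_mod_cast Nat.choose_pos hKP), mul_comm]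
  rcases lt_or_ge K A.card with h | h
  · have : (Finset.univ.filter fun s : KeyRing P K => A ⊆ s.1) = ∅ := by
      refine Finset.filter_eq_empty_iff.2 fun s _ hs => ?_
      have := Finset.card_le_card hs
      rw [s.2] at this
      omega
    rw [this]
    simp only [Finset.card_empty, Nat.cast_zero]
    positivity
  refine le_trans ?_ (choose_sub_sub_le hKP A.card h)
  have : (Finset.univ.filter fun s : KeyRing P K => A ⊆ s.1).card
      ≤ (Finset.powersetCard (K - A.card) Aᶜ).card := by
    refine Finset.card_le_card_of_injOn (fun s => s.1 \ A) ?_ ?_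
    · intro s hs
      simp only [Finset.coe_filter, Finset.mem_univ, true_and, Set.mem_ofPred_eq] at hs
      simp only [Finset.mem_coe, Finset.mem_powersetCard]
      refine ⟨fun a ha => by simpa using (Finset.mem_sdiff.1 ha).2, ?_⟩
      rw [Finset.card_sdiff_of_subset hs, s.2]
    · intro s hs t ht hst
      simp only [Finset.coe_filter, Finset.mem_univ, true_and, Set.mem_ofPred_eq] at hs ht
      refine Subtype.ext ?_
      rw [← Finset.sdiff_union_of_subset hs, ← Finset.sdiff_union_of_subset ht]
      exact congrArg (· ∪ A) hst
  rw [Finset.card_powersetCard, Finset.card_compl, Fintype.card_fin] at this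
  exact_mod_cast this

/-- The probability that a uniform key ring avoids `A`. -/
theorem expect_disjoint_le {P K : ℕ} (hKP : K ≤ P) (A : Finset (Fin P)) :
    𝔼 s : KeyRing P K, (if Disjoint A s.1 then (1 : ℝ) else 0)
      ≤ Real.exp (-(K / P * A.card)) := by
  have hA : A.card ≤ P := by simpa using Finset.card_le_univ A
  have hmain : 𝔼 s : KeyRing P K, (if Disjoint A s.1 then (1 : ℝ) else 0)
      ≤ (1 - (K : ℝ) / P) ^ A.card := by
    rw [expect_ite_eq_card, Fintype.card_finset_len, Fintype.card_fin,
      div_le_iff₀ (by exact_mod_cast Nat.choose_pos hKP), mul_comm]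
    refine le_trans ?_ (choose_sub_le hKP A.card hA)
    have : (Finset.univ.filter fun s : KeyRing P K => Disjoint A s.1).card
        ≤ (Finset.powersetCard K Aᶜ).card := by
      refine Finset.card_le_card_of_injOn (fun s => s.1) ?_
        (fun s _ t _ hst => Subtype.ext hst)
      intro s hs
      simp only [Finset.coe_filter, Finset.mem_univ, true_and, Set.mem_ofPred_eq] at hs
      simp only [Finset.mem_coe, Finset.mem_powersetCard]
      refine ⟨fun a ha => ?_, s.2⟩
      rw [Finset.mem_compl]
      exact fun h => Finset.disjoint_left.1 hs h ha
    rw [Finset.card_powersetCard, Finset.card_compl, Fintype.card_fin] at this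
    exact_mod_cast this
  refine hmain.trans ?_
  have hx : 0 ≤ 1 - (K : ℝ) / P := by
    rw [sub_nonneg]
    exact div_le_one_of_le₀ (by exact_mod_cast hKP) (Nat.cast_nonneg _)
  calc (1 - (K : ℝ) / P) ^ A.card ≤ (Real.exp (-(K / P))) ^ A.card :=
        pow_le_pow_left₀ hx (Real.one_sub_le_exp_neg _) _
    _ = _ := by rw [← Real.exp_nat_mul]; ring_nf

/-- A uniform key ring meets `A` with probability at most `K |A| / P`. -/
theorem expect_inter_nonempty_le {P K : ℕ} (hKP : K ≤ P) (A : Finset (Fin P)) :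
    𝔼 s : KeyRing P K, (if (A ∩ s.1).Nonempty then (1 : ℝ) else 0) ≤ K / P * A.card := by
  calc 𝔼 s : KeyRing P K, (if (A ∩ s.1).Nonempty then (1 : ℝ) else 0)
      ≤ 𝔼 s : KeyRing P K, ∑ a ∈ A, (if {a} ⊆ s.1 then (1 : ℝ) else 0) := by
        refine Finset.expect_le_expect fun s _ => ?_
        split_ifs with h
        · obtain ⟨a, ha⟩ := h
          rw [Finset.mem_inter] at ha
          have := Finset.single_le_sum (f := fun a => if {a} ⊆ s.1 then (1 : ℝ) else 0)
            (fun i _ => by split_ifs <;> norm_num) ha.1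
          simpa [ha.2] using this
        · exact Finset.sum_nonneg fun i _ => by split_ifs <;> norm_num
    _ = ∑ a ∈ A, 𝔼 s : KeyRing P K, (if {a} ⊆ s.1 then (1 : ℝ) else 0) :=
        Finset.expect_sum_comm _ _ _
    _ ≤ ∑ _a ∈ A, (K : ℝ) / P := Finset.sum_le_sum fun a _ => by
        simpa using expect_subset_le hKP {a}
    _ = _ := by rw [Finset.sum_const, nsmul_eq_mul, mul_comm]

/-- Exponential moments of the intersection of a uniform key ring with `A`. -/
theorem expect_pow_card_inter_le {P K : ℕ} (hKP : K ≤ P) (A : Finset (Fin P)) {z : ℝ}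
    (hz : 1 ≤ z) :
    𝔼 s : KeyRing P K, z ^ (A ∩ s.1).card ≤ Real.exp ((z - 1) * (K / P) * A.card) := by
  have hz' : 0 ≤ z - 1 := by linarith
  have key : ∀ s : KeyRing P K, z ^ (A ∩ s.1).card
      = ∑ B ∈ A.powerset, (z - 1) ^ B.card * (if B ⊆ s.1 then (1 : ℝ) else 0) := by
    intro s
    have h1 : z ^ (A ∩ s.1).card = ∑ B ∈ (A ∩ s.1).powerset, (z - 1) ^ B.card := by
      have := Finset.sum_pow_mul_eq_add_pow (z - 1) 1 (A ∩ s.1)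
      simp only [one_pow, mul_one, sub_add_cancel] at this
      exact this.symm
    rw [h1]
    simp only [mul_ite, mul_one, mul_zero]
    rw [← Finset.sum_filter]
    congr 1
    ext B
    simp only [Finset.mem_powerset, Finset.mem_filter, Finset.subset_inter_iff]
  calc 𝔼 s : KeyRing P K, z ^ (A ∩ s.1).card
      = ∑ B ∈ A.powerset, (z - 1) ^ B.card *
          𝔼 s : KeyRing P K, (if B ⊆ s.1 then (1 : ℝ) else 0) := by
        simp_rw [key, Finset.mul_expect]
        exact Finset.expect_sum_comm _ _ _
    _ ≤ ∑ B ∈ A.powerset, ((z - 1) * (K / P)) ^ B.card * 1 ^ (A.card - B.card) := by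
        refine Finset.sum_le_sum fun B _ => ?_
        rw [one_pow, mul_one, mul_pow]
        exact mul_le_mul_of_nonneg_left (expect_subset_le hKP B) (by positivity)
    _ = ((z - 1) * (K / P) + 1) ^ A.card := Finset.sum_pow_mul_eq_add_pow _ _ _
    _ ≤ (Real.exp ((z - 1) * (K / P))) ^ A.card :=
        pow_le_pow_left₀ (by positivity) (Real.add_one_le_exp _) _
    _ = _ := by rw [← Real.exp_nat_mul]; ring_nf

/-! ### Unions of key rings -/

/-- The keys held by the nodes of `T`. -/
def keyUnion {n K P : ℕ} (σ : Fin n → KeyRing P K) (T : Finset (Fin n)) : Finset (Fin P) :=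
  T.biUnion fun i => (σ i).1

theorem keyUnion_insert {n K P : ℕ} (σ : Fin n → KeyRing P K) (T : Finset (Fin n)) (i : Fin n) :
    keyUnion σ (insert i T) = (σ i).1 ∪ keyUnion σ T := by
  simp [keyUnion, Finset.biUnion_insert]

theorem keyUnion_mono {n K P : ℕ} (σ : Fin n → KeyRing P K) {S T : Finset (Fin n)} (h : S ⊆ T) :
    keyUnion σ S ⊆ keyUnion σ T :=
  Finset.biUnion_subset_biUnion_of_subset_left _ h

theorem keyUnion_congr {n K P : ℕ} {σ τ : Fin n → KeyRing P K} {T : Finset (Fin n)}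
    (h : ∀ i ∈ T, σ i = τ i) : keyUnion σ T = keyUnion τ T :=
  Finset.biUnion_congr rfl fun i hi => by rw [h i hi]

theorem card_keyUnion_le {n K P : ℕ} (σ : Fin n → KeyRing P K) (T : Finset (Fin n)) :
    (keyUnion σ T).card ≤ K * T.card := by
  rw [mul_comm]
  exact Finset.card_biUnion_le_card_mul _ _ _ fun i _ => (σ i).2.le

theorem update_of_notMem {ι α : Type*} [DecidableEq ι] {T : Finset ι} {v : ι} (hv : v ∉ T)
    (σ : ι → α) (s : α) : ∀ i ∈ T, Function.update σ v s i = σ i := fun _ hi =>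
  Function.update_of_ne (ne_of_mem_of_not_mem hi hv) _ _

/-- Exponential moments of the number of repeated keys in a set of nodes. -/
theorem expect_pow_defect_le {n K P : ℕ} (hKP : K ≤ P) {z : ℝ} (hz : 1 ≤ z)
    (B : Finset (Fin n)) :
    𝔼 σ : Fin n → KeyRing P K, z ^ (K * B.card - (keyUnion σ B).card)
      ≤ Real.exp ((z - 1) * ((K : ℝ) ^ 2 / P) * (B.card : ℝ) ^ 2) := by
  have := nonempty_keyRing hKP
  have hz' : 0 ≤ z - 1 := by linarith
  induction B using Finset.induction_on with
  | empty => simp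
  | insert i B hi ih =>
    have hstep : ∀ (σ : Fin n → KeyRing P K) (s : KeyRing P K),
        z ^ (K * (insert i B).card - (keyUnion (Function.update σ i s) (insert i B)).card)
          = z ^ (K * B.card - (keyUnion σ B).card) * z ^ (keyUnion σ B ∩ s.1).card := by
      intro σ s
      rw [keyUnion_insert, Function.update_self, keyUnion_congr (update_of_notMem hi σ s),
        ← pow_add, Finset.card_insert_of_notMem hi]
      congr 1
      have h1 := Finset.card_union_add_card_inter s.1 (keyUnion σ B)
      have h2 := card_keyUnion_le σ B
      rw [s.2, Finset.inter_comm] at h1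
      rw [mul_add, mul_one]
      have h3 : (keyUnion σ B ∩ s.1).card ≤ (keyUnion σ B).card :=
        Finset.card_le_card Finset.inter_subset_left
      omega
    calc _ = 𝔼 σ : Fin n → KeyRing P K, z ^ (K * B.card - (keyUnion σ B).card) *
          𝔼 s : KeyRing P K, z ^ (keyUnion σ B ∩ s.1).card := by
          rw [expect_update _ i]
          simp_rw [hstep, Finset.mul_expect]
      _ ≤ 𝔼 σ : Fin n → KeyRing P K, z ^ (K * B.card - (keyUnion σ B).card) *
          Real.exp ((z - 1) * (K / P) * (K * B.card)) := by
          refine Finset.expect_le_expect fun σ _ => ?_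
          refine mul_le_mul_of_nonneg_left ?_ (by positivity)
          refine (expect_pow_card_inter_le hKP _ hz).trans ?_
          refine Real.exp_le_exp.2 ?_
          refine mul_le_mul_of_nonneg_left ?_ (by positivity)
          exact_mod_cast card_keyUnion_le σ B
      _ ≤ Real.exp ((z - 1) * ((K : ℝ) ^ 2 / P) * (B.card : ℝ) ^ 2) *
          Real.exp ((z - 1) * (K / P) * (K * B.card)) := by
          rw [← Finset.expect_mul]
          exact mul_le_mul_of_nonneg_right ih (Real.exp_pos _).le
      _ ≤ _ := by
          rw [← Real.exp_add, Finset.card_insert_of_notMem hi]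
          refine Real.exp_le_exp.2 ?_
          have h0 : 0 ≤ (z - 1) * ((K : ℝ) ^ 2 / P) := by positivity
          have h1 : (z - 1) * (K / P) * (K * B.card) = (z - 1) * ((K : ℝ) ^ 2 / P) * B.card := by
            ring
          rw [h1, ← mul_add]
          refine mul_le_mul_of_nonneg_left ?_ h0
          push_cast
          nlinarith [Nat.cast_nonneg (α := ℝ) B.card]

/-! ### The probability that a fresh node is not linked to a given set -/

/-- Given the key rings `σ`, the probability that a node with a fresh key ring has no edge
towards `T`. -/
def avoidProb {n K P : ℕ} (p : ℝ) (σ : Fin n → KeyRing P K) (T : Finset (Fin n)) : ℝ :=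
  𝔼 s : KeyRing P K, ∏ i ∈ T, if ((σ i).1 ∩ s.1).Nonempty then 1 - p else 1

/-- The average of `exp (-K |keyUnion| / P)` over a `p`-random subset of `T`. -/
def thinnedSum {n K P : ℕ} (p : ℝ) (σ : Fin n → KeyRing P K) (T : Finset (Fin n)) : ℝ :=
  ∑ B ∈ T.powerset, p ^ B.card * (1 - p) ^ (T.card - B.card) *
    Real.exp (-(K / P * (keyUnion σ B).card))

theorem avoidProb_nonneg {n K P : ℕ} {p : ℝ} (hp1 : p ≤ 1) (σ : Fin n → KeyRing P K)
    (T : Finset (Fin n)) : 0 ≤ avoidProb p σ T :=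
  Finset.expect_nonneg fun s _ => Finset.prod_nonneg fun i _ => by
    split_ifs
    · linarith
    · norm_num

theorem avoidProb_le_one {n K P : ℕ} (hKP : K ≤ P) {p : ℝ} (hp0 : 0 ≤ p) (hp1 : p ≤ 1)
    (σ : Fin n → KeyRing P K) (T : Finset (Fin n)) : avoidProb p σ T ≤ 1 := by
  have := nonempty_keyRing hKP
  refine Finset.expect_le Finset.univ_nonempty fun s _ =>
    Finset.prod_le_one (fun i _ => ?_) fun i _ => ?_ <;> split_ifs <;> linarith

theorem avoidProb_le_thinnedSum {n K P : ℕ} (hKP : K ≤ P) {p : ℝ} (hp0 : 0 ≤ p) (hp1 : p ≤ 1)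
    (σ : Fin n → KeyRing P K) (T : Finset (Fin n)) : avoidProb p σ T ≤ thinnedSum p σ T := by
  have hp1' : 0 ≤ 1 - p := by linarith
  have key : ∀ s : KeyRing P K,
      (∏ i ∈ T, if ((σ i).1 ∩ s.1).Nonempty then 1 - p else 1) =
        ∑ B ∈ T.powerset, p ^ B.card * (1 - p) ^ (T.card - B.card) *
          (if Disjoint (keyUnion σ B) s.1 then (1 : ℝ) else 0) := by
    intro s
    have h1 : ∀ i, (if ((σ i).1 ∩ s.1).Nonempty then 1 - p else 1) =
        (if Disjoint (σ i).1 s.1 then p else 0) + (1 - p) := by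
      intro i
      by_cases h : Disjoint (σ i).1 s.1
      · have h' : ¬ ((σ i).1 ∩ s.1).Nonempty := by
          rwa [← Finset.not_disjoint_iff_nonempty_inter, not_not]
        simp [h, h']
      · have h' : ((σ i).1 ∩ s.1).Nonempty := Finset.not_disjoint_iff_nonempty_inter.1 h
        simp [h, h']
    simp_rw [h1]
    rw [Finset.prod_add]
    refine Finset.sum_congr rfl fun B hB => ?_
    rw [Finset.prod_const, Finset.card_sdiff_of_subset (Finset.mem_powerset.1 hB)]
    have h2 : (∏ i ∈ B, if Disjoint (σ i).1 s.1 then p else 0)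
        = p ^ B.card * (if Disjoint (keyUnion σ B) s.1 then (1 : ℝ) else 0) := by
      simp only [keyUnion, Finset.disjoint_biUnion_left]
      split_ifs with h
      · rw [mul_one, ← Finset.prod_const]
        exact Finset.prod_congr rfl fun i hi => by rw [if_pos (h i hi)]
      · push Not at h
        obtain ⟨i, hi, hi'⟩ := h
        rw [mul_zero]
        exact Finset.prod_eq_zero hi (if_neg hi')
    rw [h2]
    ring
  unfold avoidProb thinnedSum
  simp_rw [key]
  rw [Finset.expect_sum_comm]
  refine Finset.sum_le_sum fun B _ => ?_
  rw [← Finset.mul_expect]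
  exact mul_le_mul_of_nonneg_left (expect_disjoint_le hKP _) (by positivity)

theorem one_sub_add_mul_exp_le {p x y : ℝ} (hp0 : 0 ≤ p) (hy0 : 0 ≤ y) (hyx : y ≤ x) :
    1 - p + p * Real.exp (-y) ≤ Real.exp (-(p * (1 - x / 2) * y)) := by
  have h1 : Real.exp (-y) ≤ 1 - y + y ^ 2 / 2 := by
    have := Real.quadratic_le_exp_of_nonneg hy0
    rw [Real.exp_neg, inv_le_iff_one_le_mul₀ (Real.exp_pos _)]
    have h0 : 0 ≤ 1 - y + y ^ 2 / 2 := by nlinarith [sq_nonneg (y - 1)]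
    refine le_trans ?_ (mul_le_mul_of_nonneg_left this h0)
    nlinarith [sq_nonneg (y ^ 2)]
  have h2 : 1 - p + p * Real.exp (-y) ≤ 1 - p * (1 - x / 2) * y := by
    have h3 : y * y ≤ x * y := mul_le_mul_of_nonneg_right hyx hy0
    nlinarith [mul_le_mul_of_nonneg_left h1 hp0, mul_le_mul_of_nonneg_left h3 hp0]
  exact h2.trans (Real.one_sub_le_exp_neg _)

theorem thinnedSum_le_exp_keyUnion {n K P : ℕ} {p : ℝ} (hp0 : 0 ≤ p) (hp1 : p ≤ 1)
    (σ : Fin n → KeyRing P K) (T : Finset (Fin n)) :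
    thinnedSum p σ T
      ≤ Real.exp (-(p * (1 - (K : ℝ) ^ 2 / P / 2) * (K / P * (keyUnion σ T).card))) := by
  have hp1' : 0 ≤ 1 - p := by linarith
  induction T using Finset.induction_on with
  | empty => simp [thinnedSum, keyUnion]
  | insert i T hi ih =>
    set u : ℕ := ((σ i).1 \ keyUnion σ T).card with hu
    have hcard : (keyUnion σ (insert i T)).card = u + (keyUnion σ T).card := by
      rw [keyUnion_insert, ← Finset.sdiff_union_self_eq_union,
        Finset.card_union_of_disjoint Finset.sdiff_disjoint]
    have hstep : thinnedSum p σ (insert i T)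
        ≤ (1 - p + p * Real.exp (-(K / P * u))) * thinnedSum p σ T := by
      unfold thinnedSum
      rw [Finset.sum_powerset_insert hi, add_mul, Finset.mul_sum, Finset.mul_sum,
        Finset.card_insert_of_notMem hi]
      refine add_le_add (Finset.sum_le_sum fun B hB => ?_) (Finset.sum_le_sum fun B hB => ?_)
      · have hBT := Finset.card_le_card (Finset.mem_powerset.1 hB)
        rw [show T.card + 1 - B.card = T.card - B.card + 1 by omega, pow_succ]
        exact le_of_eq (by ring)
      · have hBT := Finset.mem_powerset.1 hB
        have hiB : i ∉ B := fun h => hi (hBT h)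
        rw [Finset.card_insert_of_notMem hiB, Nat.add_sub_add_right, pow_succ]
        have hU : u + (keyUnion σ B).card ≤ (keyUnion σ (insert i B)).card := by
          rw [keyUnion_insert, ← Finset.sdiff_union_self_eq_union,
            Finset.card_union_of_disjoint Finset.sdiff_disjoint]
          exact Nat.add_le_add_right (Finset.card_le_card
            (Finset.sdiff_subset_sdiff le_rfl (keyUnion_mono σ hBT))) _
        have hE : Real.exp (-(K / P * (keyUnion σ (insert i B)).card))
            ≤ Real.exp (-(K / P * u)) * Real.exp (-(K / P * (keyUnion σ B).card)) := by
          rw [← Real.exp_add]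
          refine Real.exp_le_exp.2 ?_
          have : ((u : ℝ) + (keyUnion σ B).card) ≤ (keyUnion σ (insert i B)).card := by
            exact_mod_cast hU
          have := mul_le_mul_of_nonneg_left this (by positivity : (0 : ℝ) ≤ K / P)
          linarith
        calc _ ≤ p ^ B.card * p * (1 - p) ^ (T.card - B.card) * (Real.exp (-(K / P * u)) *
              Real.exp (-(K / P * (keyUnion σ B).card))) :=
              mul_le_mul_of_nonneg_left hE (by positivity)
          _ = _ := by ring
    refine hstep.trans ?_
    have hy : (K : ℝ) / P * u ≤ (K : ℝ) ^ 2 / P := by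
      have : (u : ℝ) ≤ K := by
        have := Finset.card_le_card (Finset.sdiff_subset (s := (σ i).1) (t := keyUnion σ T))
        rw [(σ i).2] at this
        exact_mod_cast this
      calc (K : ℝ) / P * u ≤ K / P * K := by gcongr
        _ = _ := by ring
    have h1 := one_sub_add_mul_exp_le hp0 (by positivity) hy
    have h0 : 0 ≤ thinnedSum p σ T := Finset.sum_nonneg fun B _ => by positivity
    refine (mul_le_mul h1 ih h0 (Real.exp_pos _).le).trans (le_of_eq ?_)
    rw [← Real.exp_add, hcard]
    congr 1
    push_cast
    ring

/-- If every subset of `T` has a key union at least proportional to its size, up to a truncation,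
then a fresh node is linked to `T` with large probability. -/
theorem thinnedSum_le_of_forall_subset {n K P : ℕ} {p y e : ℝ} (hp0 : 0 ≤ p) (hp1 : p ≤ 1)
    (σ : Fin n → KeyRing P K) (T : Finset (Fin n))
    (h : ∀ B ⊆ T, Real.exp (-(K / P * (keyUnion σ B).card)) ≤ Real.exp (-(y * B.card)) + e) :
    thinnedSum p σ T ≤ (1 - p + p * Real.exp (-y)) ^ T.card + e := by
  have hp1' : 0 ≤ 1 - p := by linarith
  calc thinnedSum p σ T
      ≤ ∑ B ∈ T.powerset, p ^ B.card * (1 - p) ^ (T.card - B.card) *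
          (Real.exp (-(y * B.card)) + e) :=
        Finset.sum_le_sum fun B hB => mul_le_mul_of_nonneg_left (h B (Finset.mem_powerset.1 hB))
          (by positivity)
    _ = ∑ B ∈ T.powerset, (p * Real.exp (-y)) ^ B.card * (1 - p) ^ (T.card - B.card) +
          (∑ B ∈ T.powerset, p ^ B.card * (1 - p) ^ (T.card - B.card)) * e := by
        rw [Finset.sum_mul, ← Finset.sum_add_distrib]
        refine Finset.sum_congr rfl fun B _ => ?_
        rw [mul_pow, ← Real.exp_nat_mul, show (B.card : ℝ) * -y = -(y * B.card) by ring]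
        ring
    _ = _ := by
        rw [Finset.sum_pow_mul_eq_add_pow, Finset.sum_pow_mul_eq_add_pow]
        simp only [add_sub_cancel, one_pow, one_mul]
        ring

/-- Conditional independence: given the key rings of `T`, the key rings of the other nodes can be
averaged out one by one. -/
theorem expect_mul_prod_eq {ι α : Type*} [Fintype ι] [DecidableEq ι] [Fintype α] [Nonempty α]
    (T W : Finset ι) (hTW : Disjoint W T) (A : (ι → α) → ℝ) (h : ι → (ι → α) → α → ℝ)
    (hA : DependsOn A (T : Set ι)) (hh : ∀ v s, DependsOn (fun σ => h v σ s) (T : Set ι)) :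
    𝔼 σ, A σ * ∏ v ∈ W, h v σ (σ v) = 𝔼 σ, A σ * ∏ v ∈ W, 𝔼 s, h v σ s := by
  induction W using Finset.induction_on generalizing A with
  | empty => simp
  | insert v W hv ih =>
    rw [Finset.disjoint_insert_left] at hTW
    have hupd : ∀ (σ : ι → α) (s : α), ∀ i ∈ (T : Set ι), Function.update σ v s i = σ i :=
      fun σ s i hi => update_of_notMem hTW.1 σ s i hi
    have hhu : ∀ u t σ s, h u (Function.update σ v s) t = h u σ t :=
      fun u t σ s => hh u t (hupd σ s)
    have h1 : ∀ σ s, A (Function.update σ v s) *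
        ∏ u ∈ insert v W, h u (Function.update σ v s) (Function.update σ v s u)
        = A σ * (∏ u ∈ W, h u σ (σ u)) * h v σ s := by
      intro σ s
      rw [Finset.prod_insert hv, Function.update_self, hA (hupd σ s), hhu]
      have : ∏ u ∈ W, h u (Function.update σ v s) (Function.update σ v s u)
          = ∏ u ∈ W, h u σ (σ u) := Finset.prod_congr rfl fun u hu => by
        rw [update_of_notMem hv σ s u hu, hhu]
      rw [this]
      ring
    rw [expect_update _ v]
    simp_rw [h1, ← Finset.mul_expect]
    have h2 := ih hTW.2 (fun σ => A σ * 𝔼 s, h v σ s) fun σ τ hστ => by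
      simp only [hA hστ]
      congr 1
      exact Finset.expect_congr rfl fun s _ => hh v s hστ
    calc _ = 𝔼 σ, (A σ * 𝔼 s, h v σ s) * ∏ u ∈ W, h u σ (σ u) :=
          Finset.expect_congr rfl fun σ _ => by ring
      _ = _ := h2
      _ = _ := Finset.expect_congr rfl fun σ _ => by
          rw [Finset.prod_insert hv]
          ring

/-! ### The probability space -/

/-- The law of the channels. -/
abbrev chanMeasure (n : ℕ) (p : ℝ) : Measure (Sym2 (Fin n) → Bool) :=
  Measure.pi fun _ : Sym2 (Fin n) => bern p

theorem isProbabilityMeasure_bern {p : ℝ} (hp0 : 0 ≤ p) (hp1 : p ≤ 1) :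
    IsProbabilityMeasure (bern p) := by
  constructor
  simp only [bern, Measure.add_apply, Measure.smul_apply, measure_univ, smul_eq_mul, mul_one]
  rw [← ENNReal.ofReal_add hp0 (by linarith)]
  simp

theorem isProbabilityMeasure_uniformKeyMeasure {P K : ℕ} (hKP : K ≤ P) :
    IsProbabilityMeasure (uniformKeyMeasure P K) := by
  have := nonempty_keyRing hKP
  constructor
  rw [uniformKeyMeasure, Measure.smul_apply, Measure.count_univ, ENat.card_eq_coe_fintype_card,
    smul_eq_mul]
  exact ENNReal.inv_mul_cancel (by exact_mod_cast Fintype.card_ne_zero) (by simp)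

theorem isProbabilityMeasure_gonMeasure {n P K : ℕ} {p : ℝ} (hKP : K ≤ P) (hp0 : 0 ≤ p)
    (hp1 : p ≤ 1) : IsProbabilityMeasure (gonMeasure n K P p) := by
  have := isProbabilityMeasure_bern hp0 hp1
  have := isProbabilityMeasure_uniformKeyMeasure hKP
  unfold gonMeasure
  infer_instance

theorem gonMeasure_real_eq_expect {n P K : ℕ} {p : ℝ} (hKP : K ≤ P) (hp0 : 0 ≤ p)
    (hp1 : p ≤ 1) (A : Set (GonSpace n K P)) :
    (gonMeasure n K P p).real A
      = 𝔼 σ : Fin n → KeyRing P K, (chanMeasure n p).real {c | (σ, c) ∈ A} := by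
  have := isProbabilityMeasure_bern hp0 hp1
  have := isProbabilityMeasure_uniformKeyMeasure hKP
  have hμ : ∀ σ : Fin n → KeyRing P K,
      (Measure.pi fun _ : Fin n => uniformKeyMeasure P K) {σ}
        = (Fintype.card (Fin n → KeyRing P K) : ℝ≥0∞)⁻¹ := by
    intro σ
    rw [Measure.pi_singleton]
    simp [uniformKeyMeasure, Fintype.card_pi, ENNReal.inv_pow]
  rw [Measure.real, gonMeasure, Measure.prod_apply (MeasurableSet.of_discrete),
    lintegral_fintype, ENNReal.toReal_sum (fun σ _ => ?_), Fintype.expect_eq_sum_div_card,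
    Finset.sum_div]
  · refine Finset.sum_congr rfl fun σ _ => ?_
    rw [ENNReal.toReal_mul, hμ, ENNReal.toReal_inv, ENNReal.toReal_natCast, div_eq_mul_inv]
    rfl
  · exact ENNReal.mul_ne_top (measure_ne_top _ _) (measure_ne_top _ _)

theorem chanMeasure_real_rect {n : ℕ} {p : ℝ} (hp0 : 0 ≤ p) (hp1 : p ≤ 1)
    (E₁ E₀ : Finset (Sym2 (Fin n))) (hE : Disjoint E₁ E₀) :
    (chanMeasure n p).real {c | (∀ e ∈ E₁, c e = true) ∧ ∀ e ∈ E₀, c e = false}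
      = p ^ E₁.card * (1 - p) ^ E₀.card := by
  have := isProbabilityMeasure_bern hp0 hp1
  have hset : {c : Sym2 (Fin n) → Bool | (∀ e ∈ E₁, c e = true) ∧ ∀ e ∈ E₀, c e = false}
      = Set.pi Set.univ fun e =>
        if e ∈ E₁ then {true} else if e ∈ E₀ then {false} else Set.univ := by
    ext c
    simp only [Set.mem_ofPred_eq, Set.mem_pi, Set.mem_univ, forall_const]
    constructor
    · rintro ⟨h1, h2⟩ e
      split_ifs with h h'
      · exact h1 e h
      · exact h2 e h'
      · trivial
    · intro h
      refine ⟨fun e he => ?_, fun e he => ?_⟩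
      · simpa [he] using h e
      · have he' : e ∉ E₁ := fun h => Finset.disjoint_left.1 hE h he
        simpa [he, he'] using h e
  rw [hset, Measure.real, Measure.pi_pi, ENNReal.toReal_prod]
  have hterm : ∀ e,
      (bern p (if e ∈ E₁ then {true} else if e ∈ E₀ then {false} else Set.univ)).toReal
      = (if e ∈ E₁ then p else 1) * (if e ∈ E₀ then 1 - p else 1) := by
    intro e
    by_cases h1 : e ∈ E₁
    · have h0 : e ∉ E₀ := Finset.disjoint_left.1 hE h1
      simp [h1, h0, bern, hp0]
    · by_cases h0 : e ∈ E₀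
      · simp [h1, h0, bern, hp1]
      · rw [if_neg h1, if_neg h0, if_neg h1, if_neg h0, measure_univ]
        simp
  simp_rw [hterm]
  rw [Finset.prod_mul_distrib]
  simp

theorem bern_eq_map_and {p q : ℝ} (hq0 : 0 ≤ q) (hqp : q ≤ p) (hp : 0 < p) (hp1 : p ≤ 1) :
    bern q = ((bern p).prod (bern (q / p))).map fun b => b.1 && b.2 := by
  have h1 : q / p ≤ 1 := (div_le_one hp).2 hqp
  have h0 : 0 ≤ q / p := by positivity
  have := isProbabilityMeasure_bern hp.le hp1
  have := isProbabilityMeasure_bern h0 h1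
  have := isProbabilityMeasure_bern hq0 (hqp.trans hp1)
  have hmeas : Measurable fun b : Bool × Bool => b.1 && b.2 := measurable_of_countable _
  have htrue : bern q {true}
      = ((bern p).prod (bern (q / p))).map (fun b => b.1 && b.2) {true} := by
    rw [Measure.map_apply hmeas (MeasurableSet.singleton _)]
    have : (fun b : Bool × Bool => b.1 && b.2) ⁻¹' {true} = {true} ×ˢ {true} := by
      ext ⟨a, b⟩
      simp
    rw [this, Measure.prod_prod]
    simp only [bern, Measure.add_apply, Measure.smul_apply, smul_eq_mul]
    simp only [MeasurableSet.singleton, Measure.dirac_apply', Set.mem_singleton_iff,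
      Set.indicator_of_mem, Set.indicator_of_notMem, Bool.false_eq_true, not_false_eq_true,
      mul_zero, add_zero, Pi.one_apply, mul_one]
    rw [← ENNReal.ofReal_mul hp.le, mul_div_cancel₀ _ hp.ne']
  have : IsProbabilityMeasure
      (((bern p).prod (bern (q / p))).map fun b : Bool × Bool => b.1 && b.2) :=
    Measure.isProbabilityMeasure_map hmeas.aemeasurable
  refine Measure.ext_of_singleton fun b => ?_
  cases b
  · have hc : ({false} : Set Bool) = {true}ᶜ := by
      ext b
      simp
    rw [hc, prob_compl_eq_one_sub (MeasurableSet.singleton _),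
      prob_compl_eq_one_sub (MeasurableSet.singleton _), htrue]
  · exact htrue

/-- Increasing events of the channels are more likely when channels are more often on. -/
theorem chanMeasure_mono {n : ℕ} {p q : ℝ} (hq0 : 0 ≤ q) (hqp : q ≤ p) (hp : 0 < p) (hp1 : p ≤ 1)
    {A : Set (Sym2 (Fin n) → Bool)} (hA : IsUpperSet A) :
    chanMeasure n q A ≤ chanMeasure n p A := by
  have h1 : q / p ≤ 1 := (div_le_one hp).2 hqp
  have h0 : 0 ≤ q / p := by positivity
  have := isProbabilityMeasure_bern hp.le hp1
  have := isProbabilityMeasure_bern h0 h1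
  have hq := isProbabilityMeasure_bern hq0 (hqp.trans hp1)
  have hmeas : Measurable fun b : Bool × Bool => b.1 && b.2 := measurable_of_countable _
  set ν : Measure (Sym2 (Fin n) → Bool × Bool) :=
    Measure.pi fun _ => (bern p).prod (bern (q / p))
  have e1 : chanMeasure n q = ν.map fun x e => (x e).1 && (x e).2 := by
    rw [bern_eq_map_and hq0 hqp hp hp1] at hq
    have := Measure.pi_map_pi (μ := fun _ : Sym2 (Fin n) => (bern p).prod (bern (q / p)))
      (f := fun _ b => b.1 && b.2) (fun _ => hmeas.aemeasurable)
    rw [this]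
    unfold chanMeasure
    rw [← bern_eq_map_and hq0 hqp hp hp1]
  have e2 : chanMeasure n p = ν.map fun x e => (x e).1 := by
    have := Measure.pi_map_pi (μ := fun _ : Sym2 (Fin n) => (bern p).prod (bern (q / p)))
      (f := fun _ b => b.1) (fun _ => measurable_fst.aemeasurable)
    have hfst : ((bern p).prod (bern (q / p))).map (fun b => b.1) = bern p := by
      rw [show (fun b : Bool × Bool => b.1) = Prod.fst from rfl, Measure.map_fst_prod,
        measure_univ, one_smul]
    rw [this, hfst]
  rw [e1, e2, Measure.map_apply (measurable_of_countable _) (MeasurableSet.of_discrete),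
    Measure.map_apply (measurable_of_countable _) (MeasurableSet.of_discrete)]
  refine measure_mono fun x hx => hA (fun e => ?_) hx
  dsimp only
  cases (x e).1 <;> simp

/-- The probability of `k`-connectivity is nondecreasing in the channel parameter. -/
theorem gonMeasure_kConnected_mono {n P K k : ℕ} {p q : ℝ} (hKP : K ≤ P) (hq0 : 0 ≤ q)
    (hqp : q ≤ p) (hp : 0 < p) (hp1 : p ≤ 1) :
    (gonMeasure n K P q).real {ω | KConnected (gonGraph ω) k}
      ≤ (gonMeasure n K P p).real {ω | KConnected (gonGraph ω) k} := by
  have := isProbabilityMeasure_bern hp.le hp1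
  rw [gonMeasure_real_eq_expect hKP hq0 (hqp.trans hp1), gonMeasure_real_eq_expect hKP hp.le hp1]
  refine Finset.expect_le_expect fun σ _ => ENNReal.toReal_mono (measure_ne_top _ _)
    (chanMeasure_mono hq0 hqp hp hp1 ?_)
  intro c d hcd hc S hS
  refine (hc S hS).mono fun u v huv => ?_
  simp only [SimpleGraph.comap_adj, gonGraph] at huv ⊢
  refine ⟨huv.1, huv.2.1, ?_⟩
  have := hcd s(u.1, v.1)
  exact Bool.eq_true_of_true_le (huv.2.2 ▸ this)

/-! ### Small separated sets of vertices -/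

open Classical in
/-- The vertices outside `T` adjacent to some vertex of `T`. -/
def outerNbhd {n : ℕ} (G : SimpleGraph (Fin n)) (T : Finset (Fin n)) : Finset (Fin n) :=
  Finset.univ.filter fun v => v ∉ T ∧ ∃ i ∈ T, G.Adj i v

theorem mem_outerNbhd {n : ℕ} {G : SimpleGraph (Fin n)} {T : Finset (Fin n)} {v : Fin n} :
    v ∈ outerNbhd G T ↔ v ∉ T ∧ ∃ i ∈ T, G.Adj i v := by
  simp [outerNbhd]

/-- A graph which is not `k`-connected has a set of at most half of the vertices with fewer than
`k` outer neighbours. -/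
theorem exists_card_outerNbhd_le {n k : ℕ} (hk : 1 ≤ k) (hkn : k ≤ n) {G : SimpleGraph (Fin n)}
    (hG : ¬ KConnected G k) :
    ∃ T : Finset (Fin n), T.Nonempty ∧ 2 * T.card ≤ n ∧ (outerNbhd G T).card ≤ k - 1 := by
  classical
  simp only [KConnected, not_forall] at hG
  obtain ⟨S, hS, hcon⟩ := hG
  have hne : Nonempty ((S : Set (Fin n))ᶜ : Set (Fin n)) := by
    have : S.card < (Finset.univ : Finset (Fin n)).card := by
      rw [Finset.card_univ, Fintype.card_fin]
      omega
    obtain ⟨v, -, hv⟩ := Finset.exists_mem_notMem_of_card_lt_card this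
    exact ⟨⟨v, by simpa using hv⟩⟩
  have hpre : ¬ (G.induce ((S : Set (Fin n))ᶜ)).Preconnected := fun h => hcon ⟨h⟩
  simp only [SimpleGraph.Preconnected, not_forall] at hpre
  obtain ⟨u, v, huv⟩ := hpre
  let A : Finset (Fin n) := Finset.univ.filter fun w =>
    ∃ h : w ∈ ((S : Set (Fin n))ᶜ : Set (Fin n)), (G.induce _).Reachable u ⟨w, h⟩
  have hA : ∀ w, w ∈ A ↔ ∃ h : w ∈ ((S : Set (Fin n))ᶜ : Set (Fin n)),
      (G.induce _).Reachable u ⟨w, h⟩ := fun w => by simp [A]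
  have hstep : ∀ i ∈ A, ∀ w, G.Adj i w → w ∉ S → w ∈ A := by
    intro i hi w hiw hw
    obtain ⟨hiS, hri⟩ := (hA i).1 hi
    refine (hA w).2 ⟨by simpa using hw, hri.trans (SimpleGraph.Adj.reachable ?_)⟩
    exact hiw
  have hu : u.1 ∈ A := (hA _).2 ⟨u.2, SimpleGraph.Reachable.refl _⟩
  have hv : v.1 ∉ A := fun h => huv ((hA _).1 h).2
  have hvS : v.1 ∉ S := fun h => v.2 (Finset.mem_coe.2 h)
  have hNA : outerNbhd G A ⊆ S := by
    intro w hw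
    obtain ⟨hwA, i, hi, hiw⟩ := mem_outerNbhd.1 hw
    by_contra hwS
    exact hwA (hstep i hi w hiw hwS)
  have hNB : outerNbhd G (A ∪ S)ᶜ ⊆ S := by
    intro w hw
    obtain ⟨hwB, i, hi, hiw⟩ := mem_outerNbhd.1 hw
    simp only [Finset.mem_compl, Finset.mem_union, not_or, not_and, not_not] at hwB hi
    by_contra hwS
    by_cases hwA : w ∈ A
    · exact hi.1 (hstep w hwA i hiw.symm hi.2)
    · exact hwS (hwB hwA)
  have hcard : A.card + ((A ∪ S)ᶜ).card ≤ n := by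
    have h1 := Finset.card_compl_add_card (A ∪ S)
    have h2 : A.card ≤ (A ∪ S).card := Finset.card_le_card Finset.subset_union_left
    rw [Fintype.card_fin] at h1
    omega
  by_cases hle : 2 * A.card ≤ n
  · exact ⟨A, ⟨_, hu⟩, hle, (Finset.card_le_card hNA).trans hS⟩
  · exact ⟨(A ∪ S)ᶜ, ⟨v.1, by simp [hv, hvS]⟩, by omega, (Finset.card_le_card hNB).trans hS⟩

theorem KConnected.le_minDeg {n k : ℕ} (hk : 1 ≤ k) (hkn : k + 1 ≤ n) {G : SimpleGraph (Fin n)}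
    (hG : KConnected G k) : k ≤ minDeg G := by
  classical
  have : NeZero n := ⟨by omega⟩
  refine le_csInf (Set.range_nonempty _) ?_
  rintro _ ⟨v, rfl⟩
  by_contra! hlt
  set S : Finset (Fin n) := Finset.univ.filter fun w => G.Adj v w with hSdef
  have hS : S.card = gDeg G v := by
    rw [gDeg, Nat.card_eq_fintype_card, Fintype.card_subtype]
  have hvS : v ∉ S := by simp [hSdef]
  have hlt' : (insert v S).card < (Finset.univ : Finset (Fin n)).card := by
    rw [Finset.card_univ, Fintype.card_fin, Finset.card_insert_of_notMem hvS]
    omega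
  obtain ⟨w, -, hw⟩ := Finset.exists_mem_notMem_of_card_lt_card hlt'
  simp only [Finset.mem_insert, not_or] at hw
  have hcon := hG S (by omega)
  obtain ⟨W⟩ := hcon.preconnected ⟨v, by simpa using hvS⟩ ⟨w, by simpa using hw.2⟩
  cases W with
  | nil => exact hw.1 rfl
  | @cons _ x _ hadj _ =>
    have hx := x.2
    simp only [hSdef, Set.mem_compl_iff, Finset.mem_coe, Finset.mem_filter, Finset.mem_univ,
      true_and] at hx
    exact hx hadj

/-! ### The probability of a prescribed outer neighbourhood -/

theorem chanMeasure_outerNbhd_eq_le {n K P : ℕ} {p : ℝ} (hp0 : 0 ≤ p) (hp1 : p ≤ 1)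
    (σ : Fin n → KeyRing P K) {T S : Finset (Fin n)} (hST : Disjoint S T) :
    (chanMeasure n p).real {c | outerNbhd (gonGraph (σ, c)) T = S}
      ≤ (∏ v ∈ S, ∑ i ∈ T, if ((σ i).1 ∩ (σ v).1).Nonempty then p else 0) *
        ∏ v ∈ (T ∪ S)ᶜ, ∏ i ∈ T, if ((σ i).1 ∩ (σ v).1).Nonempty then 1 - p else 1 := by
  classical
  have := isProbabilityMeasure_bern hp0 hp1
  set W := (T ∪ S)ᶜ with hW
  have hWT : ∀ v ∈ W, v ∉ T := fun v hv => by
    simp only [hW, Finset.mem_compl, Finset.mem_union, not_or] at hv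
    exact hv.1
  have hWS : ∀ v ∈ W, v ∉ S := fun v hv => by
    simp only [hW, Finset.mem_compl, Finset.mem_union, not_or] at hv
    exact hv.2
  have hST' : ∀ v ∈ S, v ∉ T := fun v hv => Finset.disjoint_left.1 hST hv
  set hit : Fin n → Fin n → Prop := fun i v => ((σ i).1 ∩ (σ v).1).Nonempty with hhit
  set E₀ : Finset (Sym2 (Fin n)) :=
    ((W ×ˢ T).filter fun x => hit x.2 x.1).image fun x => s(x.2, x.1) with hE₀
  have hE₀card : (1 - p) ^ E₀.card = ∏ v ∈ W, ∏ i ∈ T, if hit i v then 1 - p else 1 := by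
    rw [hE₀, Finset.card_image_of_injOn, ← Finset.prod_const, Finset.prod_filter,
      Finset.prod_product]
    intro x hx y hy hxy
    simp only [Finset.coe_filter, Finset.mem_product, Set.mem_ofPred_eq] at hx hy
    simp only [Sym2.eq_iff] at hxy
    rcases hxy with h | h
    · exact Prod.ext h.2 h.1
    · exact absurd (h.1 ▸ hx.1.2) (hWT _ hy.1.1)
  let E₁ : (∀ v ∈ S, Fin n) → Finset (Sym2 (Fin n)) := fun φ =>
    S.attach.image fun v => s(φ v.1 v.2, v.1)
  have hE₁card : ∀ φ ∈ S.pi fun _ => T, (E₁ φ).card = S.card := by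
    intro φ hφ
    rw [Finset.mem_pi] at hφ
    rw [Finset.card_image_of_injective, Finset.card_attach]
    intro x y hxy
    simp only [Sym2.eq_iff] at hxy
    rcases hxy with h | h
    · exact Subtype.ext h.2
    · exact absurd (h.1 ▸ hφ x.1 x.2) (hST' _ y.2)
  have hdisj : ∀ φ ∈ S.pi fun _ => T, Disjoint (E₁ φ) E₀ := by
    intro φ hφ
    rw [Finset.mem_pi] at hφ
    rw [Finset.disjoint_left]
    intro e he he'
    simp only [E₁, hE₀, Finset.mem_image, Finset.mem_attach, true_and, Finset.mem_filter,
      Finset.mem_product] at he he'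
    obtain ⟨v, rfl⟩ := he
    obtain ⟨x, hx, hxe⟩ := he'
    simp only [Sym2.eq_iff] at hxe
    rcases hxe with h | h
    · exact hWS _ hx.1.1 (h.2 ▸ v.2)
    · exact hST' _ v.2 (h.1 ▸ hx.1.2)
  let R : (∀ v ∈ S, Fin n) → Set (Sym2 (Fin n) → Bool) := fun φ =>
    {c | (∀ e ∈ E₁ φ, c e = true) ∧ ∀ e ∈ E₀, c e = false}
  set F := (S.pi fun _ => T).filter fun φ => ∀ v : S, hit (φ v.1 v.2) v.1 with hF
  have hsub : {c | outerNbhd (gonGraph (σ, c)) T = S} ⊆ ⋃ φ ∈ F, R φ := by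
    intro c hc
    simp only [Set.mem_ofPred_eq] at hc
    have h1 : ∀ v ∈ S, ∃ i ∈ T, hit i v ∧ c s(i, v) = true := by
      intro v hv
      rw [← hc, mem_outerNbhd] at hv
      obtain ⟨-, i, hi, -, h, h'⟩ := hv
      exact ⟨i, hi, h, h'⟩
    choose φ hφT hφhit hφc using h1
    have h0 : ∀ e ∈ E₀, c e = false := by
      intro e he
      simp only [hE₀, Finset.mem_image, Finset.mem_filter, Finset.mem_product] at he
      obtain ⟨x, hx, rfl⟩ := he
      by_contra hce
      rw [Bool.not_eq_false] at hce
      refine hWS _ hx.1.1 (hc ▸ mem_outerNbhd.2 ⟨hWT _ hx.1.1, x.2, hx.1.2, ?_, hx.2, hce⟩)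
      exact ne_of_mem_of_not_mem hx.1.2 (hWT _ hx.1.1)
    simp only [Set.mem_iUnion]
    refine ⟨φ, ?_, ?_, h0⟩
    · simp only [hF, Finset.mem_filter, Finset.mem_pi]
      exact ⟨hφT, fun v => hφhit _ _⟩
    · intro e he
      simp only [E₁, Finset.mem_image, Finset.mem_attach, true_and] at he
      obtain ⟨v, rfl⟩ := he
      exact hφc _ _
  calc (chanMeasure n p).real {c | outerNbhd (gonGraph (σ, c)) T = S}
      ≤ (chanMeasure n p).real (⋃ φ ∈ F, R φ) := measureReal_mono hsub (measure_ne_top _ _)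
    _ ≤ ∑ φ ∈ F, (chanMeasure n p).real (R φ) := measureReal_biUnion_finset_le _ _
    _ = ∑ φ ∈ F, p ^ S.card * (1 - p) ^ E₀.card := by
        refine Finset.sum_congr rfl fun φ hφ => ?_
        have hφ' := (Finset.mem_filter.1 hφ).1
        rw [chanMeasure_real_rect hp0 hp1 _ _ (hdisj φ hφ'), hE₁card φ hφ']
    _ = (∑ φ ∈ F, p ^ S.card) * (1 - p) ^ E₀.card := by rw [Finset.sum_mul]
    _ = _ := by
        rw [hE₀card, Finset.prod_sum, hF, Finset.sum_filter]
        congr 1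
        refine Finset.sum_congr rfl fun φ _ => ?_
        split_ifs with h
        · rw [Finset.prod_congr rfl (fun v _ => if_pos (h v))]
          simp
        · push Not at h
          obtain ⟨v, hv⟩ := h
          exact (Finset.prod_eq_zero (Finset.mem_attach _ v) (if_neg hv)).symm

open Classical in
theorem gonMeasure_outerNbhd_eq_le {n K P : ℕ} {p : ℝ} (hKP : K ≤ P) (hp0 : 0 ≤ p) (hp1 : p ≤ 1)
    {T S : Finset (Fin n)} (hST : Disjoint S T) {E : (Fin n → KeyRing P K) → Prop}
    (hE : DependsOn E (T : Set (Fin n))) :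
    (gonMeasure n K P p).real {ω | E ω.1 ∧ outerNbhd (gonGraph ω) T = S}
      ≤ (T.card * (p * ((K : ℝ) ^ 2 / P))) ^ S.card *
        𝔼 σ : Fin n → KeyRing P K,
          (if E σ then 1 else 0) * avoidProb p σ T ^ (n - T.card - S.card) := by
  have := isProbabilityMeasure_bern hp0 hp1
  have := nonempty_keyRing hKP
  rw [gonMeasure_real_eq_expect hKP hp0 hp1]
  let A : (Fin n → KeyRing P K) → ℝ := fun σ => if E σ then 1 else 0
  have hA0 : ∀ σ, 0 ≤ A σ := fun σ => by
    simp only [A]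
    split_ifs <;> norm_num
  let h : Fin n → (Fin n → KeyRing P K) → KeyRing P K → ℝ := fun v σ s =>
    if v ∈ S then ∑ i ∈ T, if ((σ i).1 ∩ s.1).Nonempty then p else 0
    else ∏ i ∈ T, if ((σ i).1 ∩ s.1).Nonempty then 1 - p else 1
  have hcompl : Tᶜ = S ∪ (T ∪ S)ᶜ := by
    ext v
    have : v ∈ S → v ∉ T := fun hv => Finset.disjoint_left.1 hST hv
    simp only [Finset.mem_compl, Finset.mem_union]
    tauto
  have hdis : Disjoint S (T ∪ S)ᶜ := by
    rw [Finset.disjoint_left]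
    intro v hv hv'
    simp [hv] at hv'
  have hsplit : ∀ g : Fin n → ℝ, ∏ v ∈ Tᶜ, g v = (∏ v ∈ S, g v) * ∏ v ∈ (T ∪ S)ᶜ, g v := by
    intro g
    rw [hcompl, Finset.prod_union hdis]
  have hnotS : ∀ v ∈ (T ∪ S)ᶜ, v ∉ S := fun v hv => by
    simp only [Finset.mem_compl, Finset.mem_union, not_or] at hv
    exact hv.2
  calc 𝔼 σ : Fin n → KeyRing P K, (chanMeasure n p).real
        {c | (σ, c) ∈ {ω | E ω.1 ∧ outerNbhd (gonGraph ω) T = S}}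
      ≤ 𝔼 σ : Fin n → KeyRing P K, A σ * ∏ v ∈ Tᶜ, h v σ (σ v) := by
        refine Finset.expect_le_expect fun σ _ => ?_
        by_cases hσ : E σ
        · have hAσ : A σ = 1 := if_pos hσ
          rw [hAσ, one_mul, hsplit, Finset.prod_congr rfl (fun v hv => if_pos hv),
            Finset.prod_congr (s₁ := (T ∪ S)ᶜ) rfl (fun v hv => if_neg (hnotS v hv))]
          simpa [hσ] using chanMeasure_outerNbhd_eq_le hp0 hp1 σ hST
        · simp [hσ, A]
    _ = 𝔼 σ : Fin n → KeyRing P K, A σ * ∏ v ∈ Tᶜ, 𝔼 s, h v σ s := by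
        refine expect_mul_prod_eq T Tᶜ disjoint_compl_left A h ?_ ?_
        · intro σ τ hστ
          simp only [A, hE hστ]
        · intro v s σ τ hστ
          have hστ' : ∀ i ∈ T, σ i = τ i := fun i hi => hστ i (by simpa using hi)
          simp only [h]
          congr 1
          · exact Finset.sum_congr rfl fun i hi => by rw [hστ' i hi]
          · exact Finset.prod_congr rfl fun i hi => by rw [hστ' i hi]
    _ ≤ 𝔼 σ : Fin n → KeyRing P K, (T.card * (p * ((K : ℝ) ^ 2 / P))) ^ S.card *
          (A σ * avoidProb p σ T ^ (n - T.card - S.card)) := by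
        refine Finset.expect_le_expect fun σ _ => ?_
        have hS : ∏ v ∈ S, 𝔼 s, h v σ s ≤ (T.card * (p * ((K : ℝ) ^ 2 / P))) ^ S.card := by
          rw [← Finset.prod_const]
          refine Finset.prod_le_prod (fun v hv => Finset.expect_nonneg fun s _ => ?_)
            fun v hv => ?_
          · simp only [h, if_pos hv]
            refine Finset.sum_nonneg fun i _ => ?_
            split_ifs <;> linarith
          · simp only [h, if_pos hv]
            rw [Finset.expect_sum_comm, ← nsmul_eq_mul]
            refine Finset.sum_le_card_nsmul _ _ _ fun i _ => ?_
            calc 𝔼 s : KeyRing P K, (if ((σ i).1 ∩ s.1).Nonempty then p else 0)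
                = p * 𝔼 s : KeyRing P K, (if ((σ i).1 ∩ s.1).Nonempty then (1 : ℝ) else 0) := by
                  rw [Finset.mul_expect]
                  simp
              _ ≤ p * (K / P * (σ i).1.card) :=
                  mul_le_mul_of_nonneg_left (expect_inter_nonempty_le hKP _) hp0
              _ = p * ((K : ℝ) ^ 2 / P) := by
                  rw [(σ i).2]
                  ring
        have hW : ∏ v ∈ (T ∪ S)ᶜ, 𝔼 s, h v σ s = avoidProb p σ T ^ (n - T.card - S.card) := by
          have hcard : ((T ∪ S)ᶜ).card = n - T.card - S.card := by
            rw [Finset.card_compl, Fintype.card_fin, Finset.card_union_of_disjoint hST.symm]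
            omega
          rw [← hcard, ← Finset.prod_const]
          refine Finset.prod_congr rfl fun v hv => ?_
          simp only [h, if_neg (hnotS v hv)]
          rfl
        rw [hsplit, hW, mul_left_comm]
        exact mul_le_mul_of_nonneg_right hS
          (mul_nonneg (hA0 σ) (pow_nonneg (avoidProb_nonneg hp1 _ _) _))
    _ = _ := by rw [Finset.mul_expect]

theorem sum_pow_card_le {n k : ℕ} (hk : 1 ≤ k) {y : ℝ} (hy0 : 0 ≤ y) (hy : 1 ≤ n * y)
    (F : Finset (Finset (Fin n))) (hF : ∀ S ∈ F, S.card ≤ k - 1) :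
    ∑ S ∈ F, y ^ S.card ≤ k * (n * y) ^ (k - 1) := by
  classical
  calc ∑ S ∈ F, y ^ S.card
      = ∑ l ∈ Finset.range k, ∑ S ∈ F with S.card = l, y ^ S.card := by
        refine (Finset.sum_fiberwise_of_maps_to (fun S hS => ?_) _).symm
        have := hF S hS
        exact Finset.mem_range.2 (by omega)
    _ ≤ ∑ l ∈ Finset.range k, (n * y) ^ (k - 1) := by
        refine Finset.sum_le_sum fun l hl => ?_
        have hlk : l ≤ k - 1 := by
          have := Finset.mem_range.1 hl
          omega
        calc ∑ S ∈ F with S.card = l, y ^ S.card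
            ≤ ∑ S ∈ Finset.powersetCard l (Finset.univ : Finset (Fin n)), y ^ S.card := by
              refine Finset.sum_le_sum_of_subset_of_nonneg (fun S hS => ?_)
                fun _ _ _ => by positivity
              exact Finset.mem_powersetCard.2 ⟨Finset.subset_univ _, (Finset.mem_filter.1 hS).2⟩
          _ = ∑ S ∈ Finset.powersetCard l (Finset.univ : Finset (Fin n)), y ^ l :=
              Finset.sum_congr rfl fun S hS => by rw [(Finset.mem_powersetCard.1 hS).2]
          _ = (n.choose l : ℝ) * y ^ l := by simp
          _ ≤ (n : ℝ) ^ l * y ^ l := by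
              refine mul_le_mul_of_nonneg_right ?_ (by positivity)
              exact_mod_cast Nat.choose_le_pow n l
          _ = (n * y) ^ l := (mul_pow _ _ _).symm
          _ ≤ (n * y) ^ (k - 1) := pow_le_pow_right₀ hy hlk
    _ = k * (n * y) ^ (k - 1) := by simp

open Classical in
/-- Union bound over the small sets of vertices with fewer than `k` outer neighbours. -/
theorem gonMeasure_not_kConnected_le {n K P k : ℕ} {p : ℝ} (hKP : K ≤ P) (hp0 : 0 ≤ p)
    (hp1 : p ≤ 1) (hk : 1 ≤ k) (hkn : k ≤ n) (hL : 1 ≤ n * (p * ((K : ℝ) ^ 2 / P)))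
    (E : Finset (Fin n) → (Fin n → KeyRing P K) → Prop)
    (hE : ∀ T : Finset (Fin n), DependsOn (E T) (T : Set (Fin n))) (e : ℕ → ℝ)
    (he : ∀ T : Finset (Fin n), T.Nonempty → 2 * T.card ≤ n →
      𝔼 σ : Fin n → KeyRing P K, (if E T σ then 1 else 0) * avoidProb p σ T ^ (n - T.card - k)
        ≤ e T.card) :
    (gonMeasure n K P p).real {ω | ¬ KConnected (gonGraph ω) k}
      ≤ 𝔼 σ : Fin n → KeyRing P K, (if ∀ T, E T σ then 0 else 1)
        + ∑ r ∈ Finset.Icc 1 (n / 2),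
          n.choose r * (k * (r * (n * (p * ((K : ℝ) ^ 2 / P)))) ^ (k - 1) * e r) := by
  have hprob := isProbabilityMeasure_gonMeasure (n := n) hKP hp0 hp1
  have := isProbabilityMeasure_bern hp0 hp1
  set q : ℝ := p * ((K : ℝ) ^ 2 / P) with hq
  have hq0 : 0 ≤ q := by positivity
  let 𝒯 : Finset (Finset (Fin n)) := Finset.univ.filter fun T => T.Nonempty ∧ 2 * T.card ≤ n
  let 𝒮 : Finset (Fin n) → Finset (Finset (Fin n)) := fun T =>
    Finset.univ.filter fun S => Disjoint S T ∧ S.card ≤ k - 1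
  have hsub : {ω : GonSpace n K P | ¬ KConnected (gonGraph ω) k}
      ⊆ {ω | ¬ ∀ T, E T ω.1} ∪
        ⋃ T ∈ 𝒯, ⋃ S ∈ 𝒮 T, {ω | E T ω.1 ∧ outerNbhd (gonGraph ω) T = S} := by
    intro ω hω
    by_cases hEω : ∀ T, E T ω.1
    · right
      obtain ⟨T, hT, hTn, hcard⟩ := exists_card_outerNbhd_le hk hkn hω
      simp only [Set.mem_iUnion]
      refine ⟨T, by simp [𝒯, hT, hTn], outerNbhd (gonGraph ω) T, ?_, hEω T, rfl⟩
      simp only [𝒮, Finset.mem_filter, Finset.mem_univ, true_and]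
      exact ⟨Finset.disjoint_left.2 fun v hv => (mem_outerNbhd.1 hv).1, hcard⟩
    · exact Or.inl hEω
  have hbad : (gonMeasure n K P p).real {ω | ¬ ∀ T, E T ω.1}
      = 𝔼 σ : Fin n → KeyRing P K, (if ∀ T, E T σ then 0 else 1) := by
    rw [gonMeasure_real_eq_expect hKP hp0 hp1]
    refine Finset.expect_congr rfl fun σ _ => ?_
    by_cases h : ∀ T, E T σ
    · simp [h]
    · simp only [Set.mem_ofPred_eq, h, not_false_eq_true, if_false]
      exact probReal_univ
  have hT : ∀ T ∈ 𝒯, ∑ S ∈ 𝒮 T, (gonMeasure n K P p).real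
      {ω | E T ω.1 ∧ outerNbhd (gonGraph ω) T = S}
        ≤ k * (T.card * (n * q)) ^ (k - 1) * e T.card := by
    intro T hT
    simp only [𝒯, Finset.mem_filter, Finset.mem_univ, true_and] at hT
    set X : ℝ := 𝔼 σ : Fin n → KeyRing P K,
      (if E T σ then 1 else 0) * avoidProb p σ T ^ (n - T.card - k) with hX
    have hterm : ∀ S ∈ 𝒮 T, (gonMeasure n K P p).real
        {ω | E T ω.1 ∧ outerNbhd (gonGraph ω) T = S} ≤ (T.card * q) ^ S.card * X := by
      intro S hS
      simp only [𝒮, Finset.mem_filter, Finset.mem_univ, true_and] at hS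
      refine (gonMeasure_outerNbhd_eq_le hKP hp0 hp1 hS.1 (hE T)).trans ?_
      refine mul_le_mul_of_nonneg_left (Finset.expect_le_expect fun σ _ => ?_) (by positivity)
      refine mul_le_mul_of_nonneg_left ?_ (by split_ifs <;> norm_num)
      exact pow_le_pow_of_le_one (avoidProb_nonneg hp1 _ _) (avoidProb_le_one hKP hp0 hp1 _ _)
        (by omega)
    have hX0 : 0 ≤ X := Finset.expect_nonneg fun σ _ =>
      mul_nonneg (by split_ifs <;> norm_num) (pow_nonneg (avoidProb_nonneg hp1 _ _) _)
    have hr : (1 : ℝ) ≤ T.card := by exact_mod_cast hT.1.card_pos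
    have hnq : (T.card : ℝ) * (n * q) = n * (T.card * q) := by ring
    have hcount : ∑ S ∈ 𝒮 T, ((T.card : ℝ) * q) ^ S.card ≤ k * (T.card * (n * q)) ^ (k - 1) := by
      rw [hnq]
      refine sum_pow_card_le hk (by positivity) ?_ _ fun S hS => ?_
      · rw [← hnq]
        exact one_le_mul_of_one_le_of_one_le hr hL
      · simp only [𝒮, Finset.mem_filter, Finset.mem_univ, true_and] at hS
        exact hS.2
    calc _ ≤ ∑ S ∈ 𝒮 T, ((T.card : ℝ) * q) ^ S.card * X := Finset.sum_le_sum hterm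
      _ = (∑ S ∈ 𝒮 T, ((T.card : ℝ) * q) ^ S.card) * X := (Finset.sum_mul _ _ _).symm
      _ ≤ k * (T.card * (n * q)) ^ (k - 1) * e T.card :=
          mul_le_mul hcount (he T hT.1 hT.2) hX0 (by positivity)
  calc (gonMeasure n K P p).real {ω | ¬ KConnected (gonGraph ω) k}
      ≤ (gonMeasure n K P p).real ({ω | ¬ ∀ T, E T ω.1} ∪
        ⋃ T ∈ 𝒯, ⋃ S ∈ 𝒮 T, {ω | E T ω.1 ∧ outerNbhd (gonGraph ω) T = S}) :=
        measureReal_mono hsub (measure_ne_top _ _)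
    _ ≤ (gonMeasure n K P p).real {ω | ¬ ∀ T, E T ω.1} + (gonMeasure n K P p).real
        (⋃ T ∈ 𝒯, ⋃ S ∈ 𝒮 T, {ω | E T ω.1 ∧ outerNbhd (gonGraph ω) T = S}) :=
        measureReal_union_le _ _
    _ ≤ 𝔼 σ : Fin n → KeyRing P K, (if ∀ T, E T σ then 0 else 1) +
        ∑ T ∈ 𝒯, k * (T.card * (n * q)) ^ (k - 1) * e T.card := by
        refine add_le_add hbad.le ((measureReal_biUnion_finset_le _ _).trans
          (Finset.sum_le_sum fun T hT' => ?_))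
        exact (measureReal_biUnion_finset_le _ _).trans (hT T hT')
    _ = _ := by
        congr 1
        have hmaps : ∀ T ∈ 𝒯, T.card ∈ Finset.Icc 1 (n / 2) := by
          intro T hT
          simp only [𝒯, Finset.mem_filter, Finset.mem_univ, true_and] at hT
          have := hT.1.card_pos
          exact Finset.mem_Icc.2 ⟨this, by omega⟩
        rw [← Finset.sum_fiberwise_of_maps_to hmaps]
        refine Finset.sum_congr rfl fun r hr => ?_
        have hfib : {T ∈ 𝒯 | T.card = r} = Finset.powersetCard r Finset.univ := by
          ext T
          have := Finset.mem_Icc.1 hr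
          simp only [𝒯, Finset.mem_filter, Finset.mem_univ, true_and, Finset.mem_powersetCard,
            Finset.subset_univ]
          refine ⟨fun h => h.2, fun h => ⟨⟨Finset.card_pos.1 (by omega), by omega⟩, h⟩⟩
        rw [hfib, Finset.sum_congr rfl (g := fun _ => k * (r * (n * q)) ^ (k - 1) * e r)
          (fun T hT => by rw [(Finset.mem_powersetCard.1 hT).2])]
        simp

/-! ### Expansion of the key rings -/

/-- Every small subset of `T` carries nearly the maximal possible number of distinct keys. -/
def KeyExpanding {n K P : ℕ} (ε : ℝ) (T : Finset (Fin n)) (σ : Fin n → KeyRing P K) : Prop :=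
  ∀ B ⊆ T, (K : ℝ) * B.card ≤ ε * P → 63 / 64 * ((K : ℝ) * B.card) ≤ (keyUnion σ B).card

theorem dependsOn_keyExpanding {n K P : ℕ} (ε : ℝ) (T : Finset (Fin n)) :
    DependsOn (KeyExpanding ε T : (Fin n → KeyRing P K) → Prop) (T : Set (Fin n)) := by
  intro σ τ h
  have h' : ∀ B ⊆ T, keyUnion σ B = keyUnion τ B := fun B hB =>
    keyUnion_congr fun i hi => h i (by simpa using hB hi)
  simp only [KeyExpanding, eq_iff_iff]
  exact forall₂_congr fun B hB => by rw [h' B hB]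

theorem choose_le_exp_mul_div_pow (n b : ℕ) (hb : 1 ≤ b) :
    (n.choose b : ℝ) ≤ (Real.exp 1 * (n / b)) ^ b := by
  have hb' : (0 : ℝ) < b := by exact_mod_cast hb
  have h1 : (n.choose b : ℝ) ≤ (n : ℝ) ^ b / b.factorial := Nat.choose_le_pow_div b n
  have h2 : (b : ℝ) ^ b / b.factorial ≤ Real.exp b := Real.pow_div_factorial_le_exp _ hb'.le _
  calc (n.choose b : ℝ) ≤ (n : ℝ) ^ b / b.factorial := h1
    _ = (n / b : ℝ) ^ b * ((b : ℝ) ^ b / b.factorial) := by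
        rw [div_pow]
        field_simp
    _ ≤ (n / b : ℝ) ^ b * Real.exp b := by gcongr
    _ = (Real.exp 1 * (n / b)) ^ b := by
        rw [mul_pow, ← Real.exp_nat_mul, mul_one, mul_comm]

theorem sum_pow_succ_le {η : ℝ} (h0 : 0 ≤ η) (h1 : η ≤ 1 / 2) (n : ℕ) :
    ∑ b ∈ Finset.range n, η ^ (b + 1) ≤ 2 * η := by
  have h : ∑ b ∈ Finset.range n, η ^ (b + 1) ≤ 2 * η - 2 * η ^ (n + 1) := by
    induction n with
    | zero => simp
    | succ n ih =>
      rw [Finset.sum_range_succ]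
      have : 0 ≤ η ^ (n + 1) := by positivity
      rw [pow_succ η (n + 1)]
      nlinarith
  have : 0 ≤ η ^ (n + 1) := by positivity
  linarith

open Classical in
theorem expect_keyUnion_lt_le {n K P : ℕ} (hKP : K ≤ P) (hK : 1 ≤ K) {B : Finset (Fin n)}
    (hB : B.Nonempty) (hBP : (K : ℝ) * B.card ≤ P) :
    𝔼 σ : Fin n → KeyRing P K,
        (if ((keyUnion σ B).card : ℝ) < 63 / 64 * ((K : ℝ) * B.card) then (1 : ℝ) else 0)
      ≤ Real.exp (K * B.card - K * B.card / 64 * Real.log (P / (K * B.card))) := by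
  have hb : (0 : ℝ) < B.card := by exact_mod_cast hB.card_pos
  have hK' : (0 : ℝ) < K := by exact_mod_cast hK
  have hP : (0 : ℝ) < P := lt_of_lt_of_le hK' (by exact_mod_cast hKP)
  set z : ℝ := P / (K * B.card) with hz
  have hz1 : 1 ≤ z := (one_le_div (by positivity)).2 hBP
  have hz0 : 0 < z := by linarith
  have hlog : 0 ≤ Real.log z := Real.log_nonneg hz1
  calc 𝔼 σ : Fin n → KeyRing P K,
        (if ((keyUnion σ B).card : ℝ) < 63 / 64 * ((K : ℝ) * B.card) then (1 : ℝ) else 0)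
      ≤ 𝔼 σ : Fin n → KeyRing P K, Real.exp (-(K * B.card / 64 * Real.log z)) *
          z ^ (K * B.card - (keyUnion σ B).card) := by
        refine Finset.expect_le_expect fun σ _ => ?_
        split_ifs with h
        · have hzd : z ^ (K * B.card - (keyUnion σ B).card)
              = Real.exp ((K * B.card - (keyUnion σ B).card) * Real.log z) := by
            rw [← Real.exp_log hz0, ← Real.exp_nat_mul, Real.exp_log hz0,
              Nat.cast_sub (card_keyUnion_le σ B)]
            push_cast
            rfl
          rw [hzd, ← Real.exp_add, Real.one_le_exp_iff]
          have : 0 ≤ ((K : ℝ) * B.card * (63 / 64) - (keyUnion σ B).card) * Real.log z :=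
            mul_nonneg (by linarith) hlog
          linarith
        · positivity
    _ = Real.exp (-(K * B.card / 64 * Real.log z)) *
          𝔼 σ : Fin n → KeyRing P K, z ^ (K * B.card - (keyUnion σ B).card) := by
        rw [Finset.mul_expect]
    _ ≤ Real.exp (-(K * B.card / 64 * Real.log z)) * Real.exp (K * B.card) := by
        refine mul_le_mul_of_nonneg_left ((expect_pow_defect_le hKP hz1 B).trans ?_)
          (Real.exp_pos _).le
        refine Real.exp_le_exp.2 ?_
        have : z * ((K : ℝ) ^ 2 / P) * (B.card : ℝ) ^ 2 = K * B.card := by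
          rw [hz]
          field_simp
        have h2 : 0 ≤ ((K : ℝ) ^ 2 / P) * (B.card : ℝ) ^ 2 := by positivity
        linarith
    _ = _ := by
        rw [← Real.exp_add]
        congr 1
        ring

open Classical in
/-- Expansion of the key rings fails with small probability. -/
theorem expect_not_keyExpanding_le {n K P : ℕ} {c ε : ℝ} (hKP : K ≤ P) (hK : 128 ≤ K) (hc : 0 < c)
    (hcP : c * n ≤ P) (hε : ε ≤ Real.exp (-256))
    (hη : Real.exp 1 * K / c * Real.exp (-K) ≤ 1 / 2) :
    𝔼 σ : Fin n → KeyRing P K, (if ∀ T, KeyExpanding ε T σ then (0 : ℝ) else 1)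
      ≤ 2 * (Real.exp 1 * K / c * Real.exp (-K)) := by
  set η : ℝ := Real.exp 1 * K / c * Real.exp (-K) with hηdef
  have hK' : (128 : ℝ) ≤ K := by exact_mod_cast hK
  have hK0 : (0 : ℝ) < K := by linarith
  have hP : (0 : ℝ) < P := lt_of_lt_of_le hK0 (by exact_mod_cast hKP)
  have hη0 : 0 ≤ η := by positivity
  let small : ℕ → Prop := fun b => 1 ≤ b ∧ (K : ℝ) * b ≤ ε * P
  let g : ℕ → ℝ := fun b =>
    if small b then Real.exp (K * b - K * b / 64 * Real.log (P / (K * b))) else 0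
  have hε1 : ε ≤ 1 := hε.trans (Real.exp_le_one_iff.2 (by norm_num))
  have hB : ∀ B : Finset (Fin n), 𝔼 σ : Fin n → KeyRing P K,
      (if small B.card ∧ ((keyUnion σ B).card : ℝ) < 63 / 64 * ((K : ℝ) * B.card)
        then (1 : ℝ) else 0) ≤ g B.card := by
    intro B
    by_cases hs : small B.card
    · simp only [hs, true_and, g, if_true]
      refine expect_keyUnion_lt_le hKP (by omega) (Finset.card_pos.1 hs.1) (hs.2.trans ?_)
      nlinarith
    · simp [hs, g]
  have hg : ∀ b : ℕ, (n.choose b : ℝ) * g b ≤ if b = 0 then 0 else η ^ b := by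
    intro b
    by_cases hs : small b
    · have hb0 : b ≠ 0 := by have := hs.1; omega
      have hb : (0 : ℝ) < b := by exact_mod_cast hs.1
      simp only [g, hs, if_true, hb0, if_false]
      set z : ℝ := P / (K * b) with hz
      have hz0 : 0 < z := by positivity
      have hzlog : 256 ≤ Real.log z := by
        rw [Real.le_log_iff_exp_le hz0, hz, le_div_iff₀ (by positivity)]
        have h1 : (K : ℝ) * b ≤ Real.exp (-256) * P :=
          hs.2.trans (mul_le_mul_of_nonneg_right hε hP.le)
        calc Real.exp 256 * (K * b) ≤ Real.exp 256 * (Real.exp (-256) * P) := by gcongr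
          _ = P := by rw [← mul_assoc, ← Real.exp_add]; simp
      have hnb : (n : ℝ) / b ≤ K / c * z := by
        rw [hz, div_le_iff₀ hb]
        have : K / c * (P / (K * b)) * b = P / c := by field_simp
        rw [this, le_div_iff₀ hc]
        linarith
      calc (n.choose b : ℝ) * Real.exp (K * b - K * b / 64 * Real.log z)
          ≤ (Real.exp 1 * (n / b)) ^ b * Real.exp (K * b - K * b / 64 * Real.log z) := by
            gcongr
            exact choose_le_exp_mul_div_pow n b hs.1
        _ = (Real.exp 1 * (n / b) * Real.exp (K - K / 64 * Real.log z)) ^ b := by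
            rw [mul_pow (Real.exp 1 * ((n : ℝ) / b)), ← Real.exp_nat_mul]
            congr 2
            ring
        _ ≤ (Real.exp 1 * (K / c * z) * Real.exp (K - K / 64 * Real.log z)) ^ b := by gcongr
        _ = (Real.exp 1 * (K / c) * Real.exp (Real.log z + K - K / 64 * Real.log z)) ^ b := by
            rw [add_sub_assoc, Real.exp_add, Real.exp_log hz0]
            ring
        _ ≤ (Real.exp 1 * (K / c) * Real.exp (-K)) ^ b := by
            gcongr
            nlinarith
        _ = η ^ b := by rw [hηdef, mul_div_assoc]
    · simp only [g, hs, if_false, mul_zero]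
      split_ifs <;> positivity
  calc 𝔼 σ : Fin n → KeyRing P K, (if ∀ T, KeyExpanding ε T σ then (0 : ℝ) else 1)
      ≤ 𝔼 σ : Fin n → KeyRing P K, ∑ B : Finset (Fin n),
          (if small B.card ∧ ((keyUnion σ B).card : ℝ) < 63 / 64 * ((K : ℝ) * B.card)
            then (1 : ℝ) else 0) := by
        refine Finset.expect_le_expect fun σ _ => ?_
        have hnn : ∀ B : Finset (Fin n), B ∈ Finset.univ → (0 : ℝ) ≤ if small B.card ∧
            ((keyUnion σ B).card : ℝ) < 63 / 64 * ((K : ℝ) * B.card) then (1 : ℝ) else 0 :=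
          fun B _ => by split_ifs <;> norm_num
        split_ifs with h
        · exact Finset.sum_nonneg hnn
        · simp only [KeyExpanding, not_forall, not_le] at h
          obtain ⟨T, B, -, hBP, hlt⟩ := h
          have hB1 : 1 ≤ B.card := by
            by_contra hB0
            have : B.card = 0 := by omega
            rw [this] at hlt
            have : (0 : ℝ) ≤ (keyUnion σ B).card := by positivity
            simp only [Nat.cast_zero, mul_zero] at hlt
            linarith
          refine le_trans ?_ (Finset.single_le_sum hnn (Finset.mem_univ B))
          rw [if_pos ⟨⟨hB1, hBP⟩, hlt⟩]
    _ = ∑ B : Finset (Fin n), 𝔼 σ : Fin n → KeyRing P K,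
          (if small B.card ∧ ((keyUnion σ B).card : ℝ) < 63 / 64 * ((K : ℝ) * B.card)
            then (1 : ℝ) else 0) := Finset.expect_sum_comm _ _ _
    _ ≤ ∑ B : Finset (Fin n), g B.card := Finset.sum_le_sum fun B _ => hB B
    _ = ∑ b ∈ Finset.range (n + 1), (n.choose b : ℝ) * g b := by
        rw [← Finset.powerset_univ, Finset.sum_powerset_apply_card]
        simp
    _ ≤ ∑ b ∈ Finset.range (n + 1), (if b = 0 then 0 else η ^ b) :=
        Finset.sum_le_sum fun b _ => hg b
    _ = ∑ b ∈ Finset.range n, η ^ (b + 1) := by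
        rw [Finset.sum_range_succ']
        simp
    _ ≤ 2 * η := sum_pow_succ_le hη0 hη n

/-! ### Bounds for the avoidance probability -/

theorem expect_avoidProb_pow_le {n K P : ℕ} {p : ℝ} (hKP : K ≤ P) (hp0 : 0 ≤ p) (hp1 : p ≤ 1)
    (hx : (K : ℝ) ^ 2 / P ≤ 2) (T : Finset (Fin n)) (m : ℕ) :
    𝔼 σ : Fin n → KeyRing P K, avoidProb p σ T ^ m
      ≤ Real.exp (-((1 - (K : ℝ) ^ 2 / P / 2) * (T.card * (p * ((K : ℝ) ^ 2 / P)) * m))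
        + (Real.exp (p * (1 - (K : ℝ) ^ 2 / P / 2) * (K / P) * m) - 1) *
          ((K : ℝ) ^ 2 / P) * (T.card : ℝ) ^ 2) := by
  set x : ℝ := (K : ℝ) ^ 2 / P with hxdef
  set w : ℝ := p * (1 - x / 2) * (K / P) * m with hw
  have hw0 : 0 ≤ w := by
    have : 0 ≤ 1 - x / 2 := by linarith
    positivity
  have hpt : ∀ σ : Fin n → KeyRing P K, avoidProb p σ T ^ m
      ≤ Real.exp (-((1 - x / 2) * (T.card * (p * x) * m))) *
        Real.exp w ^ (K * T.card - (keyUnion σ T).card) := by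
    intro σ
    have h1 := (avoidProb_le_thinnedSum hKP hp0 hp1 σ T).trans
      (thinnedSum_le_exp_keyUnion hp0 hp1 σ T)
    refine (pow_le_pow_left₀ (avoidProb_nonneg hp1 _ _) h1 m).trans (le_of_eq ?_)
    rw [← Real.exp_nat_mul, ← Real.exp_nat_mul, ← Real.exp_add,
      Nat.cast_sub (card_keyUnion_le σ T), hw, ← hxdef]
    congr 1
    push_cast
    have : x = K * (K / P) := by rw [hxdef]; ring
    rw [show (T.card : ℝ) * (p * x) = T.card * (p * (K * (K / P))) by rw [← this]]
    ring
  calc 𝔼 σ : Fin n → KeyRing P K, avoidProb p σ T ^ m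
      ≤ 𝔼 σ : Fin n → KeyRing P K, Real.exp (-((1 - x / 2) * (T.card * (p * x) * m))) *
        Real.exp w ^ (K * T.card - (keyUnion σ T).card) := Finset.expect_le_expect fun σ _ => hpt σ
    _ = Real.exp (-((1 - x / 2) * (T.card * (p * x) * m))) * 𝔼 σ : Fin n → KeyRing P K,
        Real.exp w ^ (K * T.card - (keyUnion σ T).card) := by rw [Finset.mul_expect]
    _ ≤ Real.exp (-((1 - x / 2) * (T.card * (p * x) * m))) *
        Real.exp ((Real.exp w - 1) * x * (T.card : ℝ) ^ 2) :=
        mul_le_mul_of_nonneg_left (expect_pow_defect_le hKP (Real.one_le_exp hw0) T)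
          (Real.exp_pos _).le
    _ = _ := by rw [← Real.exp_add]

/-- On the expansion event, a vertex outside `T` is unlikely to have no neighbour in `T`. -/
theorem KeyExpanding.avoidProb_le {n K P : ℕ} {p c ε : ℝ} (hKP : K ≤ P) (hp0 : 0 ≤ p)
    (hp1 : p ≤ 1) (hc : 0 < c) (hcP : c * n ≤ P) (hε : 0 < ε)
    (hKε : 1 ≤ ε * K) (hcK : ε * c ≤ 8 * K) (hx : (K : ℝ) ^ 2 / P ≤ 1 / 64)
    (hL : 1 ≤ n * (p * ((K : ℝ) ^ 2 / P)))
    (hexp : Real.exp (-(63 / 128 * ε * K)) ≤ 1 / 64 * (ε * c / K) * Real.exp (-8))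
    {T : Finset (Fin n)} {σ : Fin n → KeyRing P K} (hσ : KeyExpanding ε T σ) :
    avoidProb p σ T
      ≤ Real.exp (-(61 / 64 * min (T.card * (p * ((K : ℝ) ^ 2 / P))) 8)) := by
  have hK0 : (0 : ℝ) < K := by
    by_contra! h
    have : (K : ℝ) = 0 := le_antisymm h (by positivity)
    rw [this] at hKε
    norm_num at hKε
  have hP : (0 : ℝ) < P := lt_of_lt_of_le hK0 (by exact_mod_cast hKP)
  set x : ℝ := (K : ℝ) ^ 2 / P with hxdef
  have hx0 : 0 < x := by positivity
  have hxK : x = K / P * K := by rw [hxdef]; ring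
  set q : ℝ := p * x with hq
  have hq0 : 0 ≤ q := by positivity
  have hthin := avoidProb_le_thinnedSum hKP hp0 hp1 σ T
  set t : ℝ := min (T.card * q) 8 with ht
  have ht0 : 0 ≤ t := le_min (by positivity) (by norm_num)
  have htr : t ≤ T.card * q := min_le_left _ _
  by_cases hT : (K : ℝ) * T.card ≤ ε * P
  · refine hthin.trans ((thinnedSum_le_exp_keyUnion hp0 hp1 σ T).trans (Real.exp_le_exp.2 ?_))
    have hU := hσ T subset_rfl hT
    have h1 : 63 / 64 * (x * T.card) ≤ K / P * (keyUnion σ T).card := by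
      calc 63 / 64 * (x * T.card) = K / P * (63 / 64 * (K * T.card)) := by rw [hxK]; ring
        _ ≤ _ := by gcongr
    have h2 : 62 / 64 * (T.card * q) ≤ p * (1 - x / 2) * (K / P * (keyUnion σ T).card) := by
      calc 62 / 64 * (T.card * q) ≤ p * (127 / 128) * (63 / 64 * (x * T.card)) := by
            have : 0 ≤ (T.card : ℝ) * q := by positivity
            rw [hq] at this ⊢
            linarith
        _ ≤ p * (1 - x / 2) * (K / P * (keyUnion σ T).card) := by
            have hx2 : 127 / 128 ≤ 1 - x / 2 := by linarith
            have hx3 : 0 ≤ 1 - x / 2 := by linarith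
            gcongr
    rw [← hxdef]
    linarith
  · push Not at hT
    have hfl : ε * P / (2 * K) ≤ (⌊ε * P / K⌋₊ : ℝ) := by
      have h1 : 1 ≤ ε * P / K := by
        rw [le_div_iff₀ hK0]
        have : (K : ℝ) ^ 2 ≤ P := by
          rw [hxdef, div_le_iff₀ hP] at hx
          linarith
        nlinarith
      have h2 : (1 : ℝ) ≤ ⌊ε * P / K⌋₊ := by
        exact_mod_cast (Nat.one_le_floor_iff _).2 h1
      have h3 := Nat.lt_floor_add_one (ε * P / K)
      have h4 : ε * P / (2 * K) = ε * P / K / 2 := by field_simp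
      rw [h4]
      linarith
    have hsub : ∀ B ⊆ T, Real.exp (-(K / P * (keyUnion σ B).card))
        ≤ Real.exp (-(63 / 64 * x * B.card)) + Real.exp (-(63 / 128 * ε * K)) := by
      intro B hB
      by_cases hBε : (K : ℝ) * B.card ≤ ε * P
      · refine le_add_of_le_of_nonneg (Real.exp_le_exp.2 (neg_le_neg ?_)) (Real.exp_pos _).le
        calc 63 / 64 * x * B.card = K / P * (63 / 64 * (K * B.card)) := by rw [hxK]; ring
          _ ≤ _ := by
            gcongr
            exact hσ B hB hBε
      · refine le_add_of_nonneg_of_le (Real.exp_pos _).le (Real.exp_le_exp.2 (neg_le_neg ?_))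
        push Not at hBε
        have hfB : ⌊ε * P / K⌋₊ ≤ B.card := by
          refine Nat.floor_le_of_le ?_
          rw [div_le_iff₀ hK0]
          linarith
        obtain ⟨B', hB', hcard⟩ := Finset.exists_subset_card_eq hfB
        have hB'ε : (K : ℝ) * B'.card ≤ ε * P := by
          have := Nat.floor_le (a := ε * P / K) (by positivity)
          rw [hcard, mul_comm]
          rwa [le_div_iff₀ hK0] at this
        calc 63 / 128 * ε * K = K / P * (63 / 64 * (K * (ε * P / (2 * K)))) := by
              field_simp
              norm_num
          _ ≤ K / P * (63 / 64 * (K * B'.card)) := by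
              rw [hcard]
              gcongr
          _ ≤ K / P * (keyUnion σ B').card := by
              gcongr
              exact hσ B' (hB'.trans hB) hB'ε
          _ ≤ K / P * (keyUnion σ B).card := by
              gcongr
              exact keyUnion_mono σ hB'
    have hf := hthin.trans (thinnedSum_le_of_forall_subset hp0 hp1 σ T hsub)
    have hpow : (1 - p + p * Real.exp (-(63 / 64 * x))) ^ T.card
        ≤ Real.exp (-(62 / 64 * t)) := by
      have h0 := one_sub_add_mul_exp_le (x := x) hp0 (y := 63 / 64 * x) (by positivity)
        (by linarith)
      refine (pow_le_pow_left₀ ?_ h0 _).trans ?_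
      · have := Real.exp_pos (-(63 / 64 * x))
        nlinarith
      · rw [← Real.exp_nat_mul, Real.exp_le_exp]
        have h5 : 62 / 64 * (T.card * q) ≤ T.card * (p * (1 - x / 2) * (63 / 64 * x)) := by
          have h6 : 0 ≤ (T.card : ℝ) * q := by positivity
          calc 62 / 64 * (T.card * q) ≤ (T.card * q) * (127 / 128 * (63 / 64)) := by linarith
            _ ≤ (T.card * q) * ((1 - x / 2) * (63 / 64)) := by
                gcongr
                linarith
            _ = _ := by rw [hq]; ring
        linarith
    have ht1 : ε * c / K ≤ t := by
      refine le_min ?_ ?_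
      · rw [div_le_iff₀ hK0]
        have hr : ε * P ≤ K * T.card := hT.le
        calc ε * c = ε * c * 1 := (mul_one _).symm
          _ ≤ ε * c * (n * q) := by gcongr
          _ = ε * (c * n) * q := by ring
          _ ≤ ε * P * q := by gcongr
          _ ≤ K * T.card * q := by gcongr
          _ = T.card * q * K := by ring
      · rw [div_le_iff₀ hK0]
        exact hcK
    have he : Real.exp (-(63 / 128 * ε * K)) ≤ Real.exp (-(62 / 64 * t)) * (t / 64) := by
      have ht8 : t ≤ 8 := min_le_right _ _
      calc Real.exp (-(63 / 128 * ε * K)) ≤ 1 / 64 * (ε * c / K) * Real.exp (-8) := hexp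
        _ ≤ 1 / 64 * t * Real.exp (-(62 / 64 * t)) := by
            gcongr
            linarith
        _ = _ := by ring
    calc avoidProb p σ T
        ≤ Real.exp (-(62 / 64 * t)) + Real.exp (-(62 / 64 * t)) * (t / 64) :=
          hf.trans (add_le_add hpow he)
      _ = Real.exp (-(62 / 64 * t)) * (t / 64 + 1) := by ring
      _ ≤ Real.exp (-(62 / 64 * t)) * Real.exp (t / 64) := by
          gcongr
          exact Real.add_one_le_exp _
      _ = Real.exp (-(61 / 64 * t)) := by
          rw [← Real.exp_add]
          congr 1
          ring

/-! ### Sets of few vertices -/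

theorem le_sq_of_le_mul {n K P : ℕ} {p c l : ℝ} (hn : 0 < n) (hp0 : 0 ≤ p) (hp1 : p ≤ 1)
    (hK : 0 < K) (hKP : K ≤ P) (hc : 0 < c) (hcP : c * n ≤ P)
    (hLl : l ≤ n * (p * ((K : ℝ) ^ 2 / P))) : c * l ≤ (K : ℝ) ^ 2 := by
  have hP : (0 : ℝ) < P := by exact_mod_cast lt_of_lt_of_le hK hKP
  have hn' : (0 : ℝ) < n := by exact_mod_cast hn
  calc c * l ≤ c * (n * (p * ((K : ℝ) ^ 2 / P))) := by gcongr
    _ = c * n * (p * ((K : ℝ) ^ 2 / P)) := by ring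
    _ ≤ P * (1 * ((K : ℝ) ^ 2 / P)) := by gcongr
    _ = (K : ℝ) ^ 2 := by field_simp

set_option maxHeartbeats 400000 in
theorem expect_avoidProb_pow_le_of_card_le {n K P k : ℕ} {p c c₁ s : ℝ} (hKP : K ≤ P) (hK : 0 < K)
    (hp0 : 0 ≤ p) (hp1 : p ≤ 1) (hc : 0 < c) (hc₁ : 0 < c₁) (hcP : c * n ≤ P) (hs1 : 1 ≤ s)
    (hns : (n : ℝ) = s ^ 8) (hl1 : 1 ≤ Real.log n) (hx : (K : ℝ) ^ 2 / P ≤ c₁ / Real.log n)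
    (hx2 : (K : ℝ) ^ 2 / P ≤ 2) (hLl : Real.log n ≤ n * (p * ((K : ℝ) ^ 2 / P)))
    (hL2 : n * (p * ((K : ℝ) ^ 2 / P)) ≤ 2 * Real.log n) (hls : 2 * Real.log n ≤ s)
    (hcs : 1 ≤ c * s ^ 4) (hcl : 256 ≤ c * Real.log n)
    (hks : 2 * Real.log n * (s + k) ≤ s ^ 8) (T : Finset (Fin n)) (hT : (T.card : ℝ) ≤ s) :
    𝔼 σ : Fin n → KeyRing P K, avoidProb p σ T ^ (n - T.card - k)
      ≤ Real.exp (-(T.card * (n * (p * ((K : ℝ) ^ 2 / P)) - (5 * c₁ + 2)))) := by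
  have hn' : (0 : ℝ) < n := by rw [hns]; positivity
  have hKsq := le_sq_of_le_mul (by exact_mod_cast hn') hp0 hp1 hK hKP hc hcP hLl
  have hK0 : (0 : ℝ) < K := by exact_mod_cast hK
  have hP : (0 : ℝ) < P := by exact_mod_cast lt_of_lt_of_le hK hKP
  have hlog : Real.log n = 8 * Real.log s := by
    rw [hns, Real.log_pow]
    norm_num
  set l := Real.log n with hl
  set x : ℝ := (K : ℝ) ^ 2 / P with hxdef
  set q : ℝ := p * x with hq
  set r : ℝ := (T.card : ℝ) with hr
  have hx0 : 0 < x := by positivity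
  have hq0 : 0 ≤ q := by positivity
  have hr0 : 0 ≤ r := by positivity
  have hl0 : 0 < l := by linarith
  have hx2' : 0 ≤ 1 - x / 2 := by linarith
  have hxl : x * l ≤ c₁ := by rwa [le_div_iff₀ hl0] at hx
  have hrk : T.card + k ≤ n := by
    have : (T.card : ℝ) + k ≤ n := by
      rw [hns]
      have : (0 : ℝ) ≤ s + k := by positivity
      nlinarith
    exact_mod_cast this
  have hm : ((n - T.card - k : ℕ) : ℝ) = n - r - k := by
    rw [Nat.sub_sub, Nat.cast_sub hrk]
    push_cast
    ring
  have hm0 : (0 : ℝ) ≤ n - r - k := by rw [← hm]; positivity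
  refine (expect_avoidProb_pow_le hKP hp0 hp1 hx2 T _).trans (Real.exp_le_exp.2 ?_)
  rw [hm, ← hxdef, ← hq, ← hr]
  set w : ℝ := p * (1 - x / 2) * (K / P) * (n - r - k) with hw
  have hwL : w ≤ n * q / K := by
    calc w ≤ p * 1 * (K / P) * n := by
          rw [hw]
          gcongr
          · linarith
          · have : (0 : ℝ) ≤ k := by positivity
            linarith
      _ = n * q / K := by
          rw [hq, hxdef]
          field_simp
  have hw0 : 0 ≤ w := by positivity
  have hmain : r * (n * q - 1 - c₁) ≤ (1 - x / 2) * (r * q * (n - r - k)) := by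
    have h1 : q * (r + k) ≤ 1 := by
      have h2 : n * (q * (r + k)) ≤ n * 1 := by
        calc n * (q * (r + k)) = n * q * (r + k) := by ring
          _ ≤ 2 * l * (s + k) := by gcongr
          _ ≤ n * 1 := by rw [hns]; linarith
      exact le_of_mul_le_mul_left h2 hn'
    have h3 : x / 2 * (q * (n - r - k)) ≤ c₁ := by
      calc x / 2 * (q * (n - r - k)) ≤ x / 2 * (n * q) := by
            have : 0 ≤ q * (r + k) := by positivity
            exact mul_le_mul_of_nonneg_left (by linarith) (by positivity)
        _ ≤ x / 2 * (2 * l) := by gcongr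
        _ ≤ c₁ := by linarith
    have h4 : n * q - 1 - c₁ ≤ (1 - x / 2) * (q * (n - r - k)) := by linarith
    calc r * (n * q - 1 - c₁) ≤ r * ((1 - x / 2) * (q * (n - r - k))) := by gcongr
      _ = _ := by ring
  have hcorr : r * ((Real.exp w - 1) * x) ≤ 4 * c₁ + 1 := by
    by_cases hKs : s ≤ K
    · have hw1 : w ≤ 1 := hwL.trans (by
        rw [div_le_one hK0]
        linarith)
      have h1 : Real.exp w - 1 ≤ 2 * w := by
        have h := Real.abs_exp_sub_one_le (x := w) (by rw [abs_of_nonneg hw0]; exact hw1)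
        rw [abs_of_nonneg hw0] at h
        exact (le_abs_self _).trans h
      calc r * ((Real.exp w - 1) * x) ≤ K * (2 * (2 * l / K) * x) := by
            have hwK : w ≤ 2 * l / K := hwL.trans (by gcongr)
            have hexp : Real.exp w - 1 ≤ 2 * (2 * l / K) := h1.trans (by gcongr)
            have : 0 ≤ Real.exp w - 1 := by linarith [Real.one_le_exp hw0]
            gcongr
            exact hT.trans hKs
        _ = 4 * (x * l) := by
            field_simp
            ring
        _ ≤ 4 * c₁ + 1 := by linarith
    · push Not at hKs
      have hwl : w ≤ l / 8 := by
        have h1 : (n * q / K) ^ 2 ≤ (l / 8) ^ 2 := by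
          calc (n * q / K) ^ 2 = (n * q) ^ 2 / (K : ℝ) ^ 2 := by rw [div_pow]
            _ ≤ (2 * l) ^ 2 / (c * l) := by gcongr
            _ = 4 * l / c := by field_simp; norm_num
            _ ≤ (l / 8) ^ 2 := by
                rw [div_le_iff₀ hc]
                nlinarith
        exact hwL.trans (abs_le_of_sq_le_sq' h1 (by positivity)).2
      have hexp : Real.exp w ≤ s := by
        rw [hlog] at hwl
        calc Real.exp w ≤ Real.exp (Real.log s) := Real.exp_le_exp.2 (by linarith)
          _ = s := Real.exp_log (by linarith)
      have hxs : x ≤ s ^ 2 / (c * s ^ 8) := by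
        rw [hxdef]
        rw [hns] at hcP
        gcongr
      calc r * ((Real.exp w - 1) * x) ≤ s * (s * (s ^ 2 / (c * s ^ 8))) := by
            have : 0 ≤ Real.exp w - 1 := by linarith [Real.one_le_exp hw0]
            gcongr
            linarith
        _ = 1 / (c * s ^ 4) := by field_simp
        _ ≤ 1 := (div_le_one (by positivity)).2 hcs
        _ ≤ 4 * c₁ + 1 := by linarith
  have hcorr' : (Real.exp w - 1) * x * r ^ 2 ≤ r * (4 * c₁ + 1) := by
    calc (Real.exp w - 1) * x * r ^ 2 = r * (r * ((Real.exp w - 1) * x)) := by ring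
      _ ≤ r * (4 * c₁ + 1) := by gcongr
  linarith

theorem choose_mul_pow_mul_exp_le {n r k : ℕ} {L C A : ℝ} (hk : 1 ≤ k) (hr : 1 ≤ r)
    (hl1 : 1 ≤ Real.log n) (hL2 : L ≤ 2 * Real.log n)
    (hL : Real.log n + ((k : ℝ) - 1) * Real.log (Real.log n) + A ≤ L) (hL0 : 0 ≤ L) :
    (n.choose r : ℝ) * (k * (r * L) ^ (k - 1) * Real.exp (-(r * (L - C))))
      ≤ k * 2 ^ (k - 1) * Real.exp (k + C - A) ^ r := by
  have hn0 : (0 : ℝ) < n := by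
    rcases Nat.eq_zero_or_pos n with h | h
    · rw [h] at hl1
      norm_num at hl1
    · exact_mod_cast h
  set l := Real.log n with hl
  have hk1 : ((k - 1 : ℕ) : ℝ) = (k : ℝ) - 1 := by
    rw [Nat.cast_sub hk]
    norm_num
  have hr' : (1 : ℝ) ≤ r := by exact_mod_cast hr
  have hloglog : 0 ≤ Real.log l := Real.log_nonneg hl1
  have hchoose : (n.choose r : ℝ) ≤ Real.exp (r * l) := by
    calc (n.choose r : ℝ) ≤ (n : ℝ) ^ r := by exact_mod_cast Nat.choose_le_pow n r
      _ = Real.exp (r * l) := by rw [Real.exp_nat_mul, hl, Real.exp_log hn0]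
  have hkn : (0 : ℝ) ≤ (k : ℝ) - 1 := by
    rw [← hk1]
    positivity
  have hpow : ((r : ℝ) * L) ^ (k - 1)
      ≤ 2 ^ (k - 1) * Real.exp (((k : ℝ) - 1) * r + ((k : ℝ) - 1) * Real.log l * r) := by
    calc ((r : ℝ) * L) ^ (k - 1) ≤ (Real.exp r * (2 * l)) ^ (k - 1) := by
          gcongr
          linarith [Real.add_one_le_exp (r : ℝ)]
      _ = 2 ^ (k - 1) * Real.exp (((k : ℝ) - 1) * r + ((k : ℝ) - 1) * Real.log l) := by
          rw [Real.exp_add, ← hk1, Real.exp_nat_mul, Real.exp_nat_mul,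
            Real.exp_log (by linarith : (0 : ℝ) < l), mul_pow, mul_pow]
          ring
      _ ≤ _ := by
          have : 0 ≤ ((k : ℝ) - 1) * Real.log l := by positivity
          refine mul_le_mul_of_nonneg_left (Real.exp_le_exp.2 ?_) (by positivity)
          nlinarith
  calc (n.choose r : ℝ) * (k * (r * L) ^ (k - 1) * Real.exp (-(r * (L - C))))
      ≤ Real.exp (r * l) * (k * (2 ^ (k - 1) *
          Real.exp (((k : ℝ) - 1) * r + ((k : ℝ) - 1) * Real.log l * r)) *
            Real.exp (-(r * (L - C)))) := by gcongr
    _ = k * 2 ^ (k - 1) * Real.exp (r * l + (((k : ℝ) - 1) * r + ((k : ℝ) - 1) * Real.log l * r)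
          + -(r * (L - C))) := by
        simp only [Real.exp_add]
        ring
    _ ≤ k * 2 ^ (k - 1) * Real.exp (r * (k + C - A)) := by
        gcongr
        have : (r : ℝ) * (l + ((k : ℝ) - 1) * Real.log l + A) ≤ r * L := by gcongr
        linarith
    _ = _ := by rw [Real.exp_nat_mul]

/-! ### Sets of many vertices -/

theorem choose_mul_exp_pow_le {n r k : ℕ} {q s : ℝ} (hq0 : 0 ≤ q) (hs1 : 1 ≤ s)
    (hns : (n : ℝ) = s ^ 8) (hsr : s < r) (hrn : 2 * r ≤ n) (hl : 1024 ≤ Real.log n)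
    (hLl : Real.log n ≤ n * q) (hkn : 128 * k ≤ n) :
    (n.choose r : ℝ) * Real.exp (-(61 / 64 * min (r * q) 8)) ^ (n - r - k) ≤ Real.exp (-s) := by
  have hn0 : (0 : ℝ) < n := by rw [hns]; positivity
  have hr0 : (0 : ℝ) < r := by linarith
  have hr1 : 1 ≤ r := by exact_mod_cast hr0
  have hkn' : 128 * (k : ℝ) ≤ n := by exact_mod_cast hkn
  have hrn' : 2 * (r : ℝ) ≤ n := by exact_mod_cast hrn
  have hm : ((n - r - k : ℕ) : ℝ) = n - r - k := by
    rw [Nat.sub_sub, Nat.cast_sub (by omega)]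
    push_cast
    ring
  rw [← Real.exp_nat_mul, hm]
  set l := Real.log n with hldef
  have hlog : l = 8 * Real.log s := by
    rw [hldef, hns, Real.log_pow]
    norm_num
  by_cases h8 : r * q ≤ 8
  · rw [min_eq_left h8]
    have hrl : r * l ≤ 8 * n := by
      calc r * l ≤ r * (n * q) := by gcongr
        _ = r * q * n := by ring
        _ ≤ 8 * n := by gcongr
    have hr128 : 128 * (r : ℝ) ≤ n := by nlinarith
    have hchoose : (n.choose r : ℝ) ≤ Real.exp (r * (1 + 7 / 8 * l)) := by
      calc (n.choose r : ℝ) ≤ (Real.exp 1 * (n / r)) ^ r := choose_le_exp_mul_div_pow n r hr1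
        _ ≤ (Real.exp 1 * Real.exp (7 / 8 * l)) ^ r := by
            gcongr
            calc (n : ℝ) / r ≤ s ^ 8 / s := by rw [hns]; gcongr
              _ = s ^ 7 := by field_simp
              _ = Real.exp (7 / 8 * l) := by
                  rw [hlog, show 7 / 8 * (8 * Real.log s) = (7 : ℕ) * Real.log s by push_cast; ring,
                    Real.exp_nat_mul, Real.exp_log (by linarith)]
        _ = _ := by rw [← Real.exp_add, ← Real.exp_nat_mul]
    have hexp : (n - r - k : ℝ) * -(61 / 64 * (r * q)) ≤ -(r * (15 / 16 * l)) := by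
      have h1 : 63 / 64 * (n : ℝ) ≤ n - r - k := by linarith
      have h2 : 15 / 16 * (r * l) ≤ (n - r - k : ℝ) * (61 / 64 * (r * q)) := by
        calc 15 / 16 * (r * l) ≤ 15 / 16 * (r * (n * q)) := by gcongr
          _ ≤ 63 / 64 * (n : ℝ) * (61 / 64 * (r * q)) := by
              have : 0 ≤ (r : ℝ) * (n * q) := by positivity
              linarith
          _ ≤ _ := by gcongr
      linarith
    calc (n.choose r : ℝ) * Real.exp ((n - r - k : ℝ) * -(61 / 64 * (r * q)))
        ≤ Real.exp (r * (1 + 7 / 8 * l)) * Real.exp (-(r * (15 / 16 * l))) := by gcongr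
      _ = Real.exp (r * (1 - 1 / 16 * l)) := by
          rw [← Real.exp_add]
          congr 1
          ring
      _ ≤ Real.exp (-s) := Real.exp_le_exp.2 (by nlinarith)
  · push Not at h8
    rw [min_eq_right h8.le]
    have hchoose : (n.choose r : ℝ) ≤ Real.exp n := by
      calc (n.choose r : ℝ) ≤ (2 : ℝ) ^ n := by exact_mod_cast Nat.choose_le_two_pow n r
        _ ≤ Real.exp 1 ^ n := by
            gcongr
            linarith [Real.add_one_le_exp (1 : ℝ)]
        _ = Real.exp n := by rw [← Real.exp_nat_mul, mul_one]
    calc (n.choose r : ℝ) * Real.exp ((n - r - k : ℝ) * -(61 / 64 * 8))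
        ≤ Real.exp n * Real.exp (-(2 * n)) := by
          gcongr
          linarith
      _ = Real.exp (-n) := by
          rw [← Real.exp_add]
          congr 1
          ring
      _ ≤ Real.exp (-s) := by
          gcongr
          linarith

/-! ### The probability of failing to be `k`-connected -/

theorem gonMeasure_not_kConnected_le_of_large {n K P k : ℕ} {p c c₁ s A ε : ℝ} (hk : 1 ≤ k)
    (hKP : K ≤ P) (hp0 : 0 ≤ p) (hp1 : p ≤ 1) (hc : 0 < c) (hc₁ : 0 < c₁) (hcP : c * n ≤ P)
    (hx : (K : ℝ) ^ 2 / P ≤ c₁ / Real.log n)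
    (hL : Real.log n + ((k : ℝ) - 1) * Real.log (Real.log n) + A ≤ n * (p * ((K : ℝ) ^ 2 / P)))
    (hL2 : n * (p * ((K : ℝ) ^ 2 / P)) ≤ 2 * Real.log n)
    (hLl : Real.log n ≤ n * (p * ((K : ℝ) ^ 2 / P)))
    (hA : Real.exp (k + (5 * c₁ + 2) - A) ≤ 1 / 2)
    (hs1 : 1 ≤ s) (hns : (n : ℝ) = s ^ 8) (hl : 1024 ≤ Real.log n) (hls : 2 * Real.log n ≤ s)
    (hcs : 1 ≤ c * s ^ 4) (hcl : 256 ≤ c * Real.log n)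
    (hks : 2 * Real.log n * (s + k) ≤ s ^ 8) (hkn : 128 * k ≤ n)
    (hc₁l : c₁ / Real.log n ≤ 1 / 64) (hK : 128 ≤ K) (hε0 : 0 < ε) (hε : ε ≤ Real.exp (-256))
    (hKexp : Real.exp 1 * K / c * Real.exp (-K) ≤ 1 / 2) (hKε : 1 ≤ ε * K) (hcK : ε * c ≤ 8 * K)
    (hexp : Real.exp (-(63 / 128 * ε * K)) ≤ 1 / 64 * (ε * c / K) * Real.exp (-8)) :
    (gonMeasure n K P p).real {ω | ¬ KConnected (gonGraph ω) k}
      ≤ 2 * (Real.exp 1 * K / c * Real.exp (-K))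
        + (k * 2 ^ (k - 1) * (2 * Real.exp (k + (5 * c₁ + 2) - A))
          + s ^ 8 * (k * (s ^ 16) ^ (k - 1) * Real.exp (-s))) := by
  classical
  have hx64 : (K : ℝ) ^ 2 / P ≤ 1 / 64 := hx.trans hc₁l
  set q : ℝ := p * ((K : ℝ) ^ 2 / P) with hq
  have hq0 : 0 ≤ q := by positivity
  set l := Real.log n with hldef
  set C : ℝ := 5 * c₁ + 2 with hC
  set η : ℝ := Real.exp (k + C - A) with hη
  have hL1 : 1 ≤ n * q := by linarith
  let e : ℕ → ℝ := fun r =>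
    if (r : ℝ) ≤ s then Real.exp (-(r * (n * q - C)))
    else Real.exp (-(61 / 64 * min (r * q) 8)) ^ (n - r - k)
  have hunion := gonMeasure_not_kConnected_le hKP hp0 hp1 hk (by omega) hL1
    (fun T => KeyExpanding ε T) (fun T => dependsOn_keyExpanding ε T) e (by
      intro T _ _
      by_cases hTs : (T.card : ℝ) ≤ s
      · simp only [e, hTs, if_true]
        refine le_trans (Finset.expect_le_expect fun σ _ => ?_)
          (expect_avoidProb_pow_le_of_card_le (k := k) hKP (by omega) hp0 hp1 hc hc₁ hcP hs1 hns
            (by linarith) hx (by linarith) hLl hL2 hls hcs hcl hks T hTs)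
        have := pow_nonneg (avoidProb_nonneg hp1 σ T) (n - T.card - k)
        split_ifs <;> linarith
      · simp only [e, hTs, if_false]
        have := nonempty_keyRing hKP
        refine Finset.expect_le Finset.univ_nonempty fun σ _ => ?_
        split_ifs with hσ
        · rw [one_mul]
          exact pow_le_pow_left₀ (avoidProb_nonneg hp1 σ T)
            (KeyExpanding.avoidProb_le hKP hp0 hp1 hc hcP hε0 hKε hcK hx64 hL1 hexp hσ) _
        · rw [zero_mul]
          positivity)
  have hterm : ∀ r ∈ Finset.Icc 1 (n / 2),
      n.choose r * (k * (r * (n * q)) ^ (k - 1) * e r)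
        ≤ k * 2 ^ (k - 1) * η ^ r + k * (s ^ 16) ^ (k - 1) * Real.exp (-s) := by
    intro r hr
    obtain ⟨hr1, hr2⟩ := Finset.mem_Icc.1 hr
    by_cases hrs : (r : ℝ) ≤ s
    · simp only [e, hrs, if_true]
      refine le_add_of_le_of_nonneg ?_ (by positivity)
      exact choose_mul_pow_mul_exp_le hk hr1 (by linarith) hL2 hL (by positivity)
    · simp only [e, hrs, if_false]
      refine le_add_of_nonneg_of_le (by positivity) ?_
      have hcho := choose_mul_exp_pow_le (k := k) hq0 hs1 hns (not_le.1 hrs) (by omega) hl hLl hkn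
      have hrL : r * (n * q) ≤ s ^ 16 := by
        have hrn : (r : ℝ) ≤ s ^ 8 := by
          rw [← hns]
          exact_mod_cast (by omega : r ≤ n)
        calc r * (n * q) ≤ s ^ 8 * s := by
              gcongr
              linarith
          _ = s ^ 9 := by ring
          _ ≤ s ^ 16 := pow_le_pow_right₀ hs1 (by norm_num)
      calc _ = k * (r * (n * q)) ^ (k - 1) *
            (n.choose r * Real.exp (-(61 / 64 * min (r * q) 8)) ^ (n - r - k)) := by ring
        _ ≤ _ := by gcongr
  have hgeom : ∑ r ∈ Finset.Icc 1 (n / 2), η ^ r ≤ 2 * η := by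
    rw [← Finset.Ico_succ_right_eq_Icc, Finset.sum_Ico_eq_sum_range]
    simp only [add_comm 1]
    exact sum_pow_succ_le (Real.exp_pos _).le hA _
  refine hunion.trans (add_le_add
    (expect_not_keyExpanding_le hKP hK hc hcP hε hKexp) ((Finset.sum_le_sum hterm).trans ?_))
  rw [Finset.sum_add_distrib, ← Finset.mul_sum, Finset.sum_const, nsmul_eq_mul]
  refine add_le_add (mul_le_mul_of_nonneg_left hgeom (by positivity)) ?_
  refine mul_le_mul_of_nonneg_right ?_ (by positivity)
  rw [← hns, Nat.card_Icc]
  exact_mod_cast (by omega : n / 2 + 1 - 1 ≤ n)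

theorem eventually_le_mul_exp_neg {a b : ℝ} (ha : 0 < a) (hb : 0 < b) :
    ∀ᶠ x : ℝ in atTop, x * Real.exp (-(a * x)) ≤ b := by
  have h := (Real.tendsto_pow_mul_exp_neg_atTop_nhds_zero 1).comp
    (tendsto_id.const_mul_atTop ha)
  filter_upwards [h.eventually_le_const (mul_pos ha hb)] with x hx
  simp only [Function.comp_apply, pow_one, id] at hx
  exact le_of_mul_le_mul_left (by linarith) ha

/-- Uniformly over the parameters, `𝔾_on` fails to be `k`-connected with small probability as soon
as the deviation from the critical scaling is large, provided the scaling is at most twice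
`log n`. -/
theorem exists_eventually_gonMeasure_not_kConnected_le {k : ℕ} (hk : 1 ≤ k) {c c₁ ρ : ℝ}
    (hc : 0 < c) (hc₁ : 0 < c₁) (hρ : 0 < ρ) :
    ∃ A : ℝ, ∀ᶠ n : ℕ in atTop, ∀ (K P : ℕ) (p : ℝ), K ≤ P → 0 ≤ p → p ≤ 1 →
      c * n ≤ P → (K : ℝ) ^ 2 / P ≤ c₁ / Real.log n →
      Real.log n + ((k : ℝ) - 1) * Real.log (Real.log n) + A ≤ n * (p * ((K : ℝ) ^ 2 / P)) →
      n * (p * ((K : ℝ) ^ 2 / P)) ≤ 2 * Real.log n →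
      (gonMeasure n K P p).real {ω | ¬ KConnected (gonGraph ω) k} ≤ ρ := by
  obtain ⟨A, hA0, hA1, hA2⟩ : ∃ A : ℝ, 0 ≤ A ∧ Real.exp (k + (5 * c₁ + 2) - A) ≤ 1 / 2 ∧
      k * 2 ^ (k - 1) * (2 * Real.exp (k + (5 * c₁ + 2) - A)) ≤ ρ / 3 := by
    have ht : Tendsto (fun A : ℝ => Real.exp (k + (5 * c₁ + 2) - A)) atTop (nhds 0) := by
      refine Real.tendsto_exp_atBot.comp ?_
      exact tendsto_const_nhds.add_atBot tendsto_neg_atTop_atBot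
    have hk0 : (0 : ℝ) < k := by exact_mod_cast hk
    have hpos : 0 < ρ / 3 / (k * 2 ^ (k - 1) * 2) := by positivity
    obtain ⟨A, h0, h1, h2⟩ := ((eventually_ge_atTop (0 : ℝ)).and
      ((ht.eventually_le_const (by norm_num : (0 : ℝ) < 1 / 2)).and
        (ht.eventually_le_const hpos))).exists
    refine ⟨A, h0, h1, ?_⟩
    rw [le_div_iff₀ (by positivity)] at h2
    linarith
  refine ⟨A, ?_⟩
  set ε : ℝ := Real.exp (-256) with hε
  have hε0 : 0 < ε := Real.exp_pos _
  obtain ⟨K₀, hK₀⟩ : ∃ K₀ : ℝ, ∀ x ≥ K₀, 128 ≤ x ∧ Real.exp 1 * x / c * Real.exp (-x) ≤ 1 / 2 ∧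
      2 * (Real.exp 1 * x / c * Real.exp (-x)) ≤ ρ / 3 ∧ 1 ≤ ε * x ∧ ε * c ≤ 8 * x ∧
      Real.exp (-(63 / 128 * ε * x)) ≤ 1 / 64 * (ε * c / x) * Real.exp (-8) := by
    rw [← eventually_atTop]
    have hmin : 0 < min (1 / 2) (ρ / 6) * c / Real.exp 1 := by positivity
    filter_upwards [eventually_ge_atTop (128 : ℝ), eventually_ge_atTop (1 / ε),
      eventually_ge_atTop (ε * c), eventually_le_mul_exp_neg one_pos hmin,
      eventually_le_mul_exp_neg (by positivity : 0 < 63 / 128 * ε)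
        (by positivity : 0 < 1 / 64 * (ε * c) * Real.exp (-8))] with x h1 h2 h3 h4 h5
    have hx0 : 0 < x := by linarith
    have h4' : Real.exp 1 * x / c * Real.exp (-x) ≤ min (1 / 2) (ρ / 6) := by
      rw [one_mul, le_div_iff₀ (Real.exp_pos _)] at h4
      rw [div_mul_eq_mul_div, div_le_iff₀ hc]
      linarith
    refine ⟨h1, h4'.trans (min_le_left _ _), ?_, ?_, by linarith, ?_⟩
    · linarith [h4'.trans (min_le_right _ _)]
    · rw [div_le_iff₀ hε0] at h2
      linarith
    · rw [show 1 / 64 * (ε * c / x) * Real.exp (-8) = 1 / 64 * (ε * c) * Real.exp (-8) / x by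
        ring, le_div_iff₀ hx0]
      linarith
  have hsT : Tendsto (fun n : ℕ => (n : ℝ) ^ (1 / 8 : ℝ)) atTop atTop :=
    (tendsto_rpow_atTop (by norm_num)).comp tendsto_natCast_atTop_atTop
  have hlT : Tendsto (fun n : ℕ => Real.log n) atTop atTop :=
    Real.tendsto_log_atTop.comp tendsto_natCast_atTop_atTop
  have hslog : ∀ᶠ s : ℝ in atTop, 16 * Real.log s ≤ s := by
    filter_upwards [Real.isLittleO_log_id_atTop.bound (by norm_num : (0 : ℝ) < 1 / 16),
      eventually_ge_atTop (0 : ℝ)] with s hs hs0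
    simp only [Real.norm_eq_abs, id, abs_of_nonneg hs0] at hs
    linarith [le_abs_self (Real.log s)]
  have hsexp : ∀ᶠ s : ℝ in atTop, s ^ 8 * (k * (s ^ 16) ^ (k - 1) * Real.exp (-s)) ≤ ρ / 3 := by
    have h := (Real.tendsto_pow_mul_exp_neg_atTop_nhds_zero (8 + 16 * (k - 1))).const_mul (k : ℝ)
    rw [mul_zero] at h
    filter_upwards [h.eventually_le_const (by positivity : 0 < ρ / 3)] with s hs
    refine le_trans (le_of_eq ?_) hs
    rw [pow_add, pow_mul]
    ring
  filter_upwards [hsT.eventually hslog, hsT.eventually hsexp, hsT.eventually_ge_atTop 2,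
    hsT.eventually_ge_atTop (k : ℝ), hsT.eventually_ge_atTop (1 / c),
    hlT.eventually_ge_atTop 1024, hlT.eventually_ge_atTop (256 / c),
    hlT.eventually_ge_atTop (64 * c₁), hlT.eventually_ge_atTop (max K₀ 0 ^ 2 / c),
    eventually_ge_atTop (128 * k), eventually_gt_atTop 0] with
    n hslog hsexp hs2 hsk hsc hl hcl hlc₁ hlK hkn hn K P p hKP hp0 hp1 hcP hx hL hL2
  set s : ℝ := (n : ℝ) ^ (1 / 8 : ℝ) with hs
  have hns : (n : ℝ) = s ^ 8 := by
    rw [hs, ← Real.rpow_natCast, ← Real.rpow_mul (by positivity)]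
    norm_num
  have hlog : Real.log n = 8 * Real.log s := by
    rw [hns, Real.log_pow]
    norm_num
  have hk1 : (1 : ℝ) ≤ k := by exact_mod_cast hk
  have hLl : Real.log n ≤ n * (p * ((K : ℝ) ^ 2 / P)) := by
    have : 0 ≤ ((k : ℝ) - 1) * Real.log (Real.log n) :=
      mul_nonneg (by linarith) (Real.log_nonneg (by linarith))
    linarith
  have hKpos : 0 < K := by
    rcases Nat.eq_zero_or_pos K with h | h
    · rw [h] at hLl
      norm_num at hLl
      linarith
    · exact h
  have hKK₀ : K₀ ≤ K := by
    have h1 := le_sq_of_le_mul hn hp0 hp1 hKpos hKP hc hcP hLl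
    have h2 : max K₀ 0 ^ 2 ≤ (K : ℝ) ^ 2 := by
      rw [div_le_iff₀ hc] at hlK
      linarith
    exact (le_max_left _ _).trans (abs_le_of_sq_le_sq' h2 (by positivity)).2
  obtain ⟨hK128, hK1, hK2, hK3, hK4, hK5⟩ := hK₀ K hKK₀
  have hls : 2 * Real.log n ≤ s := by linarith
  have hfinal := gonMeasure_not_kConnected_le_of_large hk hKP hp0 hp1 hc hc₁ hcP hx hL hL2 hLl hA1
    (by linarith) hns hl hls
    (by
      rw [div_le_iff₀ hc] at hsc
      have : s ≤ s ^ 4 := le_self_pow₀ (by linarith) (by norm_num)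
      nlinarith)
    (by
      rw [div_le_iff₀ hc] at hcl
      linarith)
    (by
      calc 2 * Real.log n * (s + k) ≤ s * (s + s) := by gcongr
        _ = 2 * s ^ 2 := by ring
        _ ≤ s * s ^ 2 := by gcongr
        _ = s ^ 3 := by ring
        _ ≤ s ^ 8 := pow_le_pow_right₀ (by linarith) (by norm_num))
    hkn
    (by
      rw [div_le_iff₀ (by linarith)]
      linarith)
    (by exact_mod_cast hK128) hε0 le_rfl hK1 hK3 hK4 hK5
  linarith

theorem tendsto_measure_one_of_eventually {Ω : ℕ → Type*} [∀ n, MeasurableSpace (Ω n)]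
    (μ : ∀ n, Measure (Ω n)) [∀ n, IsProbabilityMeasure (μ n)] (S : ∀ n, Set (Ω n))
    (h : ∀ ρ > 0, ∀ᶠ n in atTop, 1 - ρ ≤ (μ n).real (S n)) :
    Tendsto (fun n => μ n (S n)) atTop (nhds 1) := by
  have hreal : Tendsto (fun n => (μ n).real (S n)) atTop (nhds 1) := by
    refine tendsto_order.2 ⟨fun a ha => ?_, fun a ha => ?_⟩
    · filter_upwards [h ((1 - a) / 2) (by linarith)] with n hn
      linarith
    · exact Eventually.of_forall fun n => lt_of_le_of_lt measureReal_le_one ha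
  have := (ENNReal.continuous_ofReal.tendsto 1).comp hreal
  simpa [Function.comp_def] using this

/-- The probability that `𝔾_on` is `k`-connected is eventually arbitrarily close to one. -/
theorem eventually_le_gonMeasure_kConnected {k : ℕ} (hk : 1 ≤ k) {K P : ℕ → ℕ} {p : ℕ → ℝ}
    (hKP : ∀ n, K n ≤ P n) (hp0 : ∀ n, 0 < p n) (hp1 : ∀ n, p n < 1)
    (hP : ∃ c : ℝ, 0 < c ∧ ∀ᶠ n : ℕ in atTop, c * (n : ℝ) ≤ (P n : ℝ))
    (hKsq : ∃ c : ℝ, 0 < c ∧ ∀ᶠ n : ℕ in atTop,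
      (K n : ℝ) ^ 2 / (P n : ℝ) ≤ c / Real.log n)
    {α : ℕ → ℝ}
    (hα : ∀ n, 1 ≤ n → p n * ((K n : ℝ) ^ 2 / (P n : ℝ)) =
      (Real.log n + ((k : ℝ) - 1) * Real.log (Real.log n) + α n) / (n : ℝ))
    (hαtop : Tendsto α atTop atTop) {ρ : ℝ} (hρ : 0 < ρ) :
    ∀ᶠ n in atTop,
      1 - ρ ≤ (gonMeasure n (K n) (P n) (p n)).real {ω | KConnected (gonGraph ω) k} := by
  obtain ⟨c, hc, hP⟩ := hP
  obtain ⟨c₁, hc₁, hKsq⟩ := hKsq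
  obtain ⟨A, hA⟩ := exists_eventually_gonMeasure_not_kConnected_le hk hc hc₁ hρ
  have hlT : Tendsto (fun n : ℕ => Real.log n) atTop atTop :=
    Real.tendsto_log_atTop.comp tendsto_natCast_atTop_atTop
  have hloglog : ∀ᶠ l : ℝ in atTop, ((k : ℝ) - 1) * Real.log l + A ≤ l := by
    have hk0 : (0 : ℝ) < k := by exact_mod_cast hk
    filter_upwards [Real.isLittleO_log_id_atTop.bound (by positivity : (0 : ℝ) < 1 / (2 * k)),
      eventually_ge_atTop (1 : ℝ), eventually_ge_atTop (2 * A)] with l hl hl1 hlA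
    have hlog0 : 0 ≤ Real.log l := Real.log_nonneg hl1
    simp only [Real.norm_eq_abs, id, abs_of_nonneg (by linarith : (0 : ℝ) ≤ l),
      abs_of_nonneg hlog0] at hl
    have : k * Real.log l ≤ l / 2 := by
      calc k * Real.log l ≤ k * (1 / (2 * k) * l) := by gcongr
        _ = l / 2 := by field_simp
    linarith
  filter_upwards [hA, hP, hKsq, hαtop.eventually_ge_atTop A, hlT.eventually hloglog,
    hlT.eventually_ge_atTop 1, eventually_ge_atTop 1, hαtop.eventually_ge_atTop 0] with
    n hA hP hKsq hαA hloglog hl1 hn hα0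
  have hn0 : (0 : ℝ) < n := by exact_mod_cast hn
  set L : ℝ := n * (p n * ((K n : ℝ) ^ 2 / P n)) with hLdef
  have hL : L = Real.log n + ((k : ℝ) - 1) * Real.log (Real.log n) + α n := by
    rw [hLdef, hα n hn]
    field_simp
  have hk1 : (1 : ℝ) ≤ k := by exact_mod_cast hk
  have hkl : 0 ≤ ((k : ℝ) - 1) * Real.log (Real.log n) :=
    mul_nonneg (by linarith) (Real.log_nonneg hl1)
  have hL0 : 0 < L := by linarith
  set θ : ℝ := min L (2 * Real.log n) / L with hθ
  have hθ0 : 0 ≤ θ := div_nonneg (le_min hL0.le (by linarith)) hL0.le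
  have hθ1 : θ ≤ 1 := (div_le_one hL0).2 (min_le_left _ _)
  have hθp : p n * θ ≤ p n := mul_le_of_le_one_right (hp0 n).le hθ1
  have hθL : n * (p n * θ * ((K n : ℝ) ^ 2 / P n)) = min L (2 * Real.log n) := by
    calc n * (p n * θ * ((K n : ℝ) ^ 2 / P n)) = θ * L := by rw [hLdef]; ring
      _ = min L (2 * Real.log n) := div_mul_cancel₀ _ hL0.ne'
  have hθp0 : 0 ≤ p n * θ := mul_nonneg (hp0 n).le hθ0
  have hbad := hA (K n) (P n) (p n * θ) (hKP n) hθp0 (hθp.trans (hp1 n).le) hP hKsq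
    (by
      rw [hθL]
      exact le_min (by linarith) (by linarith))
    (by
      rw [hθL]
      exact min_le_right _ _)
  have := isProbabilityMeasure_gonMeasure (n := n) (hKP n) hθp0 (hθp.trans (hp1 n).le)
  refine le_trans ?_ (gonMeasure_kConnected_mono (hKP n) hθp0 hθp (hp0 n) (hp1 n).le)
  have hcompl := probReal_compl_eq_one_sub (μ := gonMeasure n (K n) (P n) (p n * θ))
    (s := {ω | KConnected (gonGraph ω) k}) MeasurableSet.of_discrete
  rw [Set.compl_ofPred] at hcompl
  linarith

/-- one-law with the approximation `p_s ≈ K²/P`. -/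
theorem gon_one_law_approx
    (k : ℕ) (hk : 1 ≤ k) (K P : ℕ → ℕ) (p : ℕ → ℝ)
    (hKP : ∀ n, K n ≤ P n) (hp0 : ∀ n, 0 < p n) (hp1 : ∀ n, p n < 1)
    (hK2 : ∀ᶠ n : ℕ in atTop, 2 ≤ K n)
    (hP : ∃ c : ℝ, 0 < c ∧ ∀ᶠ n : ℕ in atTop, c * (n : ℝ) ≤ (P n : ℝ))
    (hKsq : ∃ c : ℝ, 0 < c ∧ ∀ᶠ n : ℕ in atTop,
      (K n : ℝ) ^ 2 / (P n : ℝ) ≤ c / Real.log n)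
    (α : ℕ → ℝ)
    (hα : ∀ n, 1 ≤ n → p n * ((K n : ℝ) ^ 2 / (P n : ℝ)) =
      (Real.log n + ((k : ℝ) - 1) * Real.log (Real.log n) + α n) / (n : ℝ))
    (hαtop : Tendsto α atTop atTop) :
    Tendsto (fun n : ℕ => gonMeasure n (K n) (P n) (p n)
        {ω | KConnected (gonGraph ω) k}) atTop (nhds 1) ∧
    Tendsto (fun n : ℕ => gonMeasure n (K n) (P n) (p n)
        {ω | k ≤ minDeg (gonGraph ω)}) atTop (nhds 1) := by
  have hprob : ∀ n, IsProbabilityMeasure (gonMeasure n (K n) (P n) (p n)) := fun n =>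
    isProbabilityMeasure_gonMeasure (hKP n) (hp0 n).le (hp1 n).le
  have hconn : ∀ ρ > 0, ∀ᶠ n in atTop,
      1 - ρ ≤ (gonMeasure n (K n) (P n) (p n)).real {ω | KConnected (gonGraph ω) k} :=
    fun ρ hρ => eventually_le_gonMeasure_kConnected hk hKP hp0 hp1 hP hKsq hα hαtop hρ
  refine ⟨tendsto_measure_one_of_eventually _ _ hconn,
    tendsto_measure_one_of_eventually _ _ fun ρ hρ => ?_⟩
  filter_upwards [hconn ρ hρ, eventually_ge_atTop (k + 1)] with n hn hkn
  exact hn.trans (measureReal_mono (fun ω hω => KConnected.le_minDeg hk hkn hω)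
    (measure_ne_top _ _))
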